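/- Let G be any bounded domain, fix τ ∈ (0,1), and let u, v ∈ C²(Ḡ) satisfy, for a constant K ≥ 1, max(F[u], P[u] − K) ≥ 0 ≥ min(F[v], −P[−v] + K) in G and v ≥ u on ∂G, and assume ‖u‖_{C^{1+χ}(G)}, ‖v‖_{C^{1+χ}(G)} ≤ M for a constant M ≥ 1. Then there exist a constant N ∈ (0,∞), depending only on τ, the diameter of G, d, K_0, and δ, and a constant η ∈ (0,1), depending only on τ, d, K_0, and δ, such that if K ≥ N M^{1/η}, then u − v ≤ N K^{−χ/4} + N M ω(M^{−1/τ} K^{−1}) in G. -/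

import Mathlib

noncomputable section

open MeasureTheory Set Filter Topology
open scoped ENNReal NNReal

/-- Euclidean space `ℝ^d`. -/
abbrev E (d : ℕ) : Type := EuclideanSpace ℝ (Fin d)

/-- Euclidean norm of a vector given as `Fin d → ℝ`. -/
def vecNorm {d : ℕ} (v : Fin d → ℝ) : ℝ := Real.sqrt (∑ i, (v i) ^ 2)

/-- Hilbert–Schmidt norm `‖σ‖² = tr σσ*` of a `d × d` matrix. -/
def matNorm {d : ℕ} (m : Fin d → Fin d → ℝ) : ℝ := Real.sqrt (∑ i, ∑ j, (m i j) ^ 2)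

/-- `m ∈ S_δ`: `m` is symmetric and `δ|ξ|² ≤ m_{ij}ξ^iξ^j ≤ δ⁻¹|ξ|²` for all `ξ`. -/
def memSdelta {d : ℕ} (δ : ℝ) (m : Fin d → Fin d → ℝ) : Prop :=
  (∀ i j, m i j = m j i) ∧
  ∀ ξ : Fin d → ℝ,
    δ * (∑ i, (ξ i) ^ 2) ≤ (∑ i, ∑ j, m i j * ξ i * ξ j) ∧
    (∑ i, ∑ j, m i j * ξ i * ξ j) ≤ δ⁻¹ * (∑ i, (ξ i) ^ 2)

/-- First partial derivative `D_i u(x)`. -/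
def D1 {d : ℕ} (u : E d → ℝ) (x : E d) (i : Fin d) : ℝ :=
  fderiv ℝ u x (EuclideanSpace.single i 1)

/-- Second partial derivative `D_{ij} u(x)`. -/
def D2 {d : ℕ} (u : E d → ℝ) (x : E d) (i j : Fin d) : ℝ :=
  fderiv ℝ (fun y => fderiv ℝ u y (EuclideanSpace.single j 1)) x (EuclideanSpace.single i 1)

/-- Third partial derivative `D_{ijk} u(x)`. -/
def D3 {d : ℕ} (u : E d → ℝ) (x : E d) (i j k : Fin d) : ℝ :=
  fderiv ℝ (fun y => D2 u y j k) x (EuclideanSpace.single i 1)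

/-- `L^{αβ}u(x) = a^{αβ}_{ij}(x) D_{ij}u(x) + b^{αβ}_i(x) D_i u(x) - c^{αβ}(x) u(x)`. -/
def Lop {d : ℕ} {A B : Type} (a : A → B → E d → Fin d → Fin d → ℝ)
    (b : A → B → E d → Fin d → ℝ) (c : A → B → E d → ℝ)
    (α : A) (β : B) (u : E d → ℝ) (x : E d) : ℝ :=
  (∑ i, ∑ j, a α β x i j * D2 u x i j) + (∑ i, b α β x i * D1 u x i) - c α β x * u x

/-- The Isaacs operator `F[u](x) = sup_α inf_β [L^{αβ}u(x) + f^{αβ}(x)]`. -/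
def Fop {d : ℕ} {A B : Type} (a : A → B → E d → Fin d → Fin d → ℝ)
    (b : A → B → E d → Fin d → ℝ) (c f : A → B → E d → ℝ) (u : E d → ℝ) (x : E d) : ℝ :=
  ⨆ α : A, ⨅ β : B, (Lop a b c α β u x + f α β x)

/-- `P[u](x) = P(D_{ij}u(x), D_i u(x), u(x))`. -/
def Pop {d : ℕ} (P : (Fin d → Fin d → ℝ) → (Fin d → ℝ) → ℝ → ℝ) (u : E d → ℝ) (x : E d) : ℝ :=
  P (fun i j => D2 u x i j) (fun i => D1 u x i) (u x)

/-- Assumption 2.1 of the paper on the coefficients `a, b, c, f`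
(with Hölder exponent `γ` for `a` and modulus `ω` for `b, c, f`). -/
def CoeffAssump {d : ℕ} {A B : Type} [MetricSpace A] [MetricSpace B]
    (δ K0 γ : ℝ) (ω : ℝ → ℝ)
    (a : A → B → E d → Fin d → Fin d → ℝ) (b : A → B → E d → Fin d → ℝ)
    (c f : A → B → E d → ℝ) : Prop :=
  (∀ α β x, memSdelta δ (a α β x)) ∧
  (∀ α β x, matNorm (a α β x) ≤ K0) ∧
  (∀ α β x, vecNorm (b α β x) ≤ K0) ∧
  (∀ α β x, 0 ≤ c α β x ∧ c α β x ≤ K0) ∧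
  (∀ α β x, |f α β x| ≤ K0) ∧
  (∀ α x, Continuous (fun β => a α β x) ∧ Continuous (fun β => b α β x) ∧
     Continuous (fun β => c α β x) ∧ Continuous (fun β => f α β x)) ∧
  (∀ (x : E d) (α₀ : A), ∀ ε : ℝ, 0 < ε → ∃ η : ℝ, 0 < η ∧ ∀ α : A, dist α α₀ < η → ∀ β : B,
     matNorm (fun i j => a α β x i j - a α₀ β x i j) < ε ∧
     vecNorm (fun i => b α β x i - b α₀ β x i) < ε ∧
     |c α β x - c α₀ β x| < ε ∧ |f α β x - f α₀ β x| < ε) ∧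
  (∀ α β x y, matNorm (fun i j => a α β x i j - a α β y i j) ≤ K0 * ‖x - y‖ ^ γ) ∧
  (∀ α β x y, vecNorm (fun i => b α β x i - b α β y i) ≤ K0 * ω ‖x - y‖) ∧
  (∀ α β x y, |c α β x - c α β y| ≤ K0 * ω ‖x - y‖) ∧
  (∀ α β x y, |f α β x - f α β y| ≤ K0 * ω ‖x - y‖)

/-- `ω` is a modulus of continuity with `t^χ ≤ ω(t)` on `[0,1]` (Remark 2.1). -/
def ModulusAssump (χ : ℝ) (ω : ℝ → ℝ) : Prop :=
  Continuous ω ∧ MonotoneOn ω (Set.Ici 0) ∧ ω 0 = 0 ∧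
  ∀ t : ℝ, t ∈ Set.Icc (0:ℝ) 1 → t ^ χ ≤ ω t

/-- `g ∈ C^{1,1}(ℝ^d)` with `‖g‖_{C^{1,1}} ≤ K0`. -/
def C11Bound {d : ℕ} (K0 : ℝ) (g : E d → ℝ) : Prop :=
  Differentiable ℝ g ∧ (∀ x, |g x| ≤ K0) ∧
  (∀ x y, |g x - g y| ≤ K0 * ‖x - y‖) ∧
  (∀ x y, ‖fderiv ℝ g x - fderiv ℝ g y‖ ≤ K0 * ‖x - y‖)

/-- Properties of the special function `P(u_{ij}, u_i, u)` constructed in Krylov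
[Methods Appl. Anal. 19 (2012)]: convex, positively homogeneous of degree one,
Lipschitz, with `(P_{u_{ij}}) ∈ S_δ̂`, `|(P_{u_i})| ≤ K₁`, `0 > P_u ≥ -K₁`
at any point of differentiability. -/
def PAssump {d : ℕ} (δhat K1 : ℝ)
    (P : (Fin d → Fin d → ℝ) → (Fin d → ℝ) → ℝ → ℝ) : Prop :=
  ConvexOn ℝ Set.univ (fun p : (Fin d → Fin d → ℝ) × (Fin d → ℝ) × ℝ => P p.1 p.2.1 p.2.2) ∧
  (∀ t : ℝ, 0 ≤ t → ∀ m v r, P (t • m) (t • v) (t * r) = t * P m v r) ∧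
  (∃ C : NNReal, LipschitzWith C
    (fun p : (Fin d → Fin d → ℝ) × (Fin d → ℝ) × ℝ => P p.1 p.2.1 p.2.2)) ∧
  (∀ p : (Fin d → Fin d → ℝ) × (Fin d → ℝ) × ℝ,
    DifferentiableAt ℝ (fun q : (Fin d → Fin d → ℝ) × (Fin d → ℝ) × ℝ => P q.1 q.2.1 q.2.2) p →
    memSdelta δhat (fun i j =>
      fderiv ℝ (fun q : (Fin d → Fin d → ℝ) × (Fin d → ℝ) × ℝ => P q.1 q.2.1 q.2.2) p
        (Pi.single i (Pi.single j (1:ℝ)), 0, 0)) ∧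
    vecNorm (fun i =>
      fderiv ℝ (fun q : (Fin d → Fin d → ℝ) × (Fin d → ℝ) × ℝ => P q.1 q.2.1 q.2.2) p
        (0, Pi.single i (1:ℝ), 0)) ≤ K1 ∧
    fderiv ℝ (fun q : (Fin d → Fin d → ℝ) × (Fin d → ℝ) × ℝ => P q.1 q.2.1 q.2.2) p (0, 0, 1) < 0 ∧
    -K1 ≤ fderiv ℝ (fun q : (Fin d → Fin d → ℝ) × (Fin d → ℝ) × ℝ => P q.1 q.2.1 q.2.2) p
      (0, 0, 1))

/-- A bounded domain of class `C²` (described by a global `C²` defining function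
with nonvanishing gradient on the boundary). -/
def IsC2Domain {d : ℕ} (G : Set (E d)) : Prop :=
  IsOpen G ∧ Bornology.IsBounded G ∧ G.Nonempty ∧ IsConnected G ∧
  ∃ ρ : E d → ℝ, ContDiff ℝ 2 ρ ∧ G = {x | ρ x < 0} ∧ ∀ x ∈ frontier G, fderiv ℝ ρ x ≠ 0

/-- The complete standing hypotheses (Assumption 2.1 etc.) of the paper. -/
def Setting {d : ℕ} {A B : Type} [MetricSpace A] [MetricSpace B]
    (δ K0 χ γ δhat K1 : ℝ) (ω : ℝ → ℝ)
    (a : A → B → E d → Fin d → Fin d → ℝ) (b : A → B → E d → Fin d → ℝ)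
    (c f : A → B → E d → ℝ) (G : Set (E d)) (g : E d → ℝ)
    (P : (Fin d → Fin d → ℝ) → (Fin d → ℝ) → ℝ → ℝ) : Prop :=
  1 ≤ d ∧ 0 < δ ∧ δ < 1 ∧ 0 ≤ K0 ∧ 0 < χ ∧ χ < 1 ∧
  γ = (4 - 3 * χ) / (8 - 4 * χ) ∧ 0 < δhat ∧ δhat < δ ∧ K0 ≤ K1 ∧
  Nonempty A ∧ Nonempty B ∧
  TopologicalSpace.SeparableSpace A ∧ TopologicalSpace.SeparableSpace B ∧
  CoeffAssump δ K0 γ ω a b c f ∧ IsC2Domain G ∧ C11Bound K0 g ∧ PAssump δhat K1 P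

/-- `u` is a solution of `max(F[u], P[u] - K) = 0` in `G` of class
`C^{1,1}_{loc}(G) ∩ C(Ḡ)` with boundary data `g` (the equation holding at almost
every point, as the second derivatives of a `C^{1,1}_{loc}` function exist a.e.). -/
def IsUSol {d : ℕ} {A B : Type} (a : A → B → E d → Fin d → Fin d → ℝ)
    (b : A → B → E d → Fin d → ℝ) (c f : A → B → E d → ℝ)
    (G : Set (E d)) (g : E d → ℝ)
    (P : (Fin d → Fin d → ℝ) → (Fin d → ℝ) → ℝ → ℝ) (K : ℝ) (u : E d → ℝ) : Prop :=
  ContinuousOn u (closure G) ∧ Set.EqOn u g (frontier G) ∧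
  DifferentiableOn ℝ u G ∧
  (∀ x ∈ G, ∃ r : ℝ, 0 < r ∧ Metric.ball x r ⊆ G ∧
     ∃ C : NNReal, LipschitzOnWith C (fderiv ℝ u) (Metric.ball x r)) ∧
  (∀ᵐ x ∂(volume : Measure (E d)), x ∈ G →
     max (Fop a b c f u x) (Pop P u x - K) = 0)

/-- `v` is a solution of `min(F[v], -P[-v] + K) = 0` in `G` of class
`C^{1,1}_{loc}(G) ∩ C(Ḡ)` with boundary data `g`. -/
def IsVSol {d : ℕ} {A B : Type} (a : A → B → E d → Fin d → Fin d → ℝ)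
    (b : A → B → E d → Fin d → ℝ) (c f : A → B → E d → ℝ)
    (G : Set (E d)) (g : E d → ℝ)
    (P : (Fin d → Fin d → ℝ) → (Fin d → ℝ) → ℝ → ℝ) (K : ℝ) (v : E d → ℝ) : Prop :=
  ContinuousOn v (closure G) ∧ Set.EqOn v g (frontier G) ∧
  DifferentiableOn ℝ v G ∧
  (∀ x ∈ G, ∃ r : ℝ, 0 < r ∧ Metric.ball x r ⊆ G ∧
     ∃ C : NNReal, LipschitzOnWith C (fderiv ℝ v) (Metric.ball x r)) ∧
  (∀ᵐ x ∂(volume : Measure (E d)), x ∈ G →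
     min (Fop a b c f v x) (-(Pop P (fun y => -(v y)) x) + K) = 0)

/-- `G_ε = {x ∈ G : dist(x, ∂G) > ε}`. -/
def Gshrink {d : ℕ} (G : Set (E d)) (ε : ℝ) : Set (E d) :=
  {x ∈ G | ε < Metric.infDist x (frontier G)}

/-- `u ∈ C^{1+χ}(Q)` with `‖u‖_{C^{1+χ}(Q)} ≤ Cb` (stated through the three
constituent quantities of the norm). -/
def HolderBound {d : ℕ} (χ : ℝ) (Q : Set (E d)) (u : E d → ℝ) (Cb : ℝ) : Prop :=
  (∀ x ∈ Q, DifferentiableAt ℝ u x) ∧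
  (∀ x ∈ Q, |u x| ≤ Cb) ∧
  (∀ x ∈ Q, ∀ y ∈ Q, |u x - u y| ≤ Cb * ‖x - y‖) ∧
  (∀ x ∈ Q, ∀ y ∈ Q, vecNorm (fun i => D1 u x i - D1 u y i) ≤ Cb * ‖x - y‖ ^ χ)

/-- `w` is a (continuous) viscosity solution of `F[w] = 0` in `G` with `w = g` on `∂G`. -/
def ViscositySolution {d : ℕ} {A B : Type} (a : A → B → E d → Fin d → Fin d → ℝ)
    (b : A → B → E d → Fin d → ℝ) (c f : A → B → E d → ℝ)
    (G : Set (E d)) (g : E d → ℝ) (w : E d → ℝ) : Prop :=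
  ContinuousOn w (closure G) ∧ Set.EqOn w g (frontier G) ∧
  (∀ φ : E d → ℝ, ContDiff ℝ (⊤ : ℕ∞) φ → ∀ x0 ∈ G,
     IsLocalMax (fun x => φ x - w x) x0 → φ x0 - w x0 = 0 → Fop a b c f φ x0 ≤ 0) ∧
  (∀ φ : E d → ℝ, ContDiff ℝ (⊤ : ℕ∞) φ → ∀ x0 ∈ G,
     IsLocalMin (fun x => φ x - w x) x0 → φ x0 - w x0 = 0 → 0 ≤ Fop a b c f φ x0)

/-!
The variables are doubled at second order. If `u - v` exceeds the claimed bound, then so does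
`w - v` with `w = u + εΨ`, where `Ψ` is a bounded convex barrier on which every operator
`a_{ij}D_{ij} + b_iD_i` is at least `1`. Near an interior maximum point `x₀` of `w - v`, the
function `w(x) - v(y) - Dv(x₀)·(x - y) - κ|x - y|² - μ|x - x₀|²` has an interior maximum `(x, y)`,
and the `C^{1+χ}` bound forces `|x - y| ≤ M ρ^χ / κ`, where `ρ` is the radius of the neighbourhood.
At `(x, y)` the Hessians of `w` and `-v` are at most of order `κ`; since `κ` is a small multiple of
`K` and `P` grows linearly, the terms `P[u] - K` and `-P[-v] + K` are inactive, so
`F[u](x) ≥ 0 ≥ F[v](y)`. The second-order maximum condition together with the Hölder bound for the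
leading coefficients bounds `L^{αβ}w(x) - L^{αβ}v(y)` by a quantity which, for `κ ~ K`,
`μ = K^{-χ/4}` and `ρ = K^{-q}`, is smaller than the gain `ε` from the barrier.
-/

open scoped MatrixOrder Matrix

section LinearAlgebra

variable {ι : Type*}

lemma isSymm_of_nonneg {A : Matrix ι ι ℝ} (hA : 0 ≤ A) : A.IsSymm :=
  (Matrix.nonneg_iff_posSemidef.1 hA).isHermitian

lemma isSymm_smul_one [DecidableEq ι] (c : ℝ) : (c • (1 : Matrix ι ι ℝ)).IsSymm :=
  Matrix.isSymm_one.smul c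

lemma smul_one_nonneg [DecidableEq ι] {c : ℝ} (hc : 0 ≤ c) : 0 ≤ c • (1 : Matrix ι ι ℝ) :=
  Matrix.nonneg_iff_posSemidef.2 (Matrix.PosSemidef.one.smul hc)

lemma smul_one_le_smul_one [DecidableEq ι] {c c' : ℝ} (h : c ≤ c') :
    c • (1 : Matrix ι ι ℝ) ≤ c' • 1 := by
  simpa [sub_smul] using smul_one_nonneg (ι := ι) (sub_nonneg.2 h)

lemma isSymm_of_smul_one_le [DecidableEq ι] {A : Matrix ι ι ℝ} {c : ℝ} (h : c • 1 ≤ A) :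
    A.IsSymm := by
  simpa using (isSymm_of_nonneg (sub_nonneg.2 h)).add (isSymm_smul_one c)

variable [Fintype ι]

lemma dotProduct_mulVec_le_of_le {A B : Matrix ι ι ℝ} (h : A ≤ B) (ξ : ι → ℝ) :
    ξ ⬝ᵥ A *ᵥ ξ ≤ ξ ⬝ᵥ B *ᵥ ξ := by
  have := (Matrix.le_iff.1 h).dotProduct_mulVec_nonneg ξ
  rwa [star_trivial, Matrix.sub_mulVec, dotProduct_sub, sub_nonneg] at this

lemma le_of_forall_dotProduct_mulVec_le {A B : Matrix ι ι ℝ} (hA : A.IsSymm) (hB : B.IsSymm)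
    (h : ∀ ξ : ι → ℝ, ξ ⬝ᵥ A *ᵥ ξ ≤ ξ ⬝ᵥ B *ᵥ ξ) : A ≤ B := by
  refine Matrix.le_iff.2 (.of_dotProduct_mulVec_nonneg (hB.sub hA) fun ξ => ?_)
  rw [star_trivial, Matrix.sub_mulVec, dotProduct_sub, sub_nonneg]
  exact h ξ

lemma dotProduct_mul_self_mulVec {Y : Matrix ι ι ℝ} (hY : Y.IsSymm) (ξ ζ : ι → ℝ) :
    ξ ⬝ᵥ (Y * Y) *ᵥ ζ = Y *ᵥ ξ ⬝ᵥ Y *ᵥ ζ := by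
  rw [← Matrix.mulVec_mulVec, Matrix.dotProduct_mulVec, ← Matrix.mulVec_transpose, hY.eq]

lemma mul_self_nonneg_of_isSymm {Y : Matrix ι ι ℝ} (hY : Y.IsSymm) : 0 ≤ Y * Y := by
  rw [Matrix.nonneg_iff_posSemidef]
  simpa [hY.eq] using Matrix.posSemidef_conjTranspose_mul_self Y

lemma trace_nonneg_of_nonneg {A : Matrix ι ι ℝ} (hA : 0 ≤ A) : 0 ≤ A.trace :=
  (Matrix.nonneg_iff_posSemidef.1 hA).trace_nonneg

lemma trace_mul_le_young {A B : Matrix ι ι ℝ} (hA : A.IsSymm) (hB : B.IsSymm) {t : ℝ}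
    (ht : 0 < t) : (A * B).trace ≤ t * (B * B).trace + (4 * t)⁻¹ * (A * A).trace := by
  set s := (2 * t)⁻¹ with hs
  have hsquare : 0 ≤ (B * B).trace - 2 * s * (A * B).trace + s ^ 2 * (A * A).trace := by
    convert trace_nonneg_of_nonneg (mul_self_nonneg_of_isSymm (hB.sub (hA.smul s))) using 1
    simp only [sub_mul, mul_sub, Matrix.smul_mul, Matrix.mul_smul, Matrix.trace_sub,
      Matrix.trace_smul, smul_eq_mul, Matrix.trace_mul_comm B A]
    ring
  have := mul_nonneg ht.le hsquare
  rw [hs] at this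
  field_simp at this ⊢
  linarith

lemma trace_mul_nonneg {A B : Matrix ι ι ℝ} (hA : 0 ≤ A) (hB : 0 ≤ B) : 0 ≤ (A * B).trace := by
  classical
  obtain ⟨C, rfl⟩ := CStarAlgebra.nonneg_iff_eq_star_mul_self.1 hA
  rw [mul_assoc, Matrix.trace_mul_comm]
  exact ((Matrix.nonneg_iff_posSemidef.1 hB).mul_mul_conjTranspose_same C).trace_nonneg

lemma trace_mul_le_trace_mul_of_le_right {A B C : Matrix ι ι ℝ} (hA : 0 ≤ A) (hBC : B ≤ C) :
    (A * B).trace ≤ (A * C).trace := by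
  have := trace_mul_nonneg hA (sub_nonneg.2 hBC)
  rwa [mul_sub, Matrix.trace_sub, sub_nonneg] at this

lemma trace_mul_le_trace_mul_of_le_left {A B C : Matrix ι ι ℝ} (hAB : A ≤ B) (hC : 0 ≤ C) :
    (A * C).trace ≤ (B * C).trace := by
  rw [Matrix.trace_mul_comm A, Matrix.trace_mul_comm B]
  exact trace_mul_le_trace_mul_of_le_right hC hAB

variable [DecidableEq ι]

lemma dotProduct_smul_one_mulVec (c : ℝ) (ξ : ι → ℝ) :
    ξ ⬝ᵥ (c • (1 : Matrix ι ι ℝ)) *ᵥ ξ = c * (ξ ⬝ᵥ ξ) := by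
  rw [Matrix.smul_mulVec, Matrix.one_mulVec, dotProduct_smul, smul_eq_mul]

lemma mul_trace_le_trace_mul {m Z : Matrix ι ι ℝ} {δ : ℝ} (hm : δ • 1 ≤ m) (hZ : 0 ≤ Z) :
    δ * Z.trace ≤ (m * Z).trace := by
  simpa using trace_mul_le_trace_mul_of_le_left hm hZ

lemma trace_mul_le_of_le_smul_one {m X : Matrix ι ι ℝ} {c : ℝ} (hm : 0 ≤ m) (hX : X ≤ c • 1) :
    (m * X).trace ≤ c * m.trace := by
  simpa using trace_mul_le_trace_mul_of_le_right hm hX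

lemma vecMulVec_self_le_smul_one (ξ : ι → ℝ) : Matrix.vecMulVec ξ ξ ≤ (ξ ⬝ᵥ ξ) • 1 := by
  refine le_of_forall_dotProduct_mulVec_le (Matrix.ext fun i j => mul_comm _ _)
    (isSymm_smul_one _) fun ζ => ?_
  rw [dotProduct_smul_one_mulVec, Matrix.vecMulVec_mulVec, op_smul_eq_smul, dotProduct_smul,
    smul_eq_mul, dotProduct_comm ζ ξ, ← sq]
  simpa only [dotProduct, sq] using Finset.sum_mul_sq_le_sq_mul_sq Finset.univ ξ ζ

lemma le_trace_smul_one_of_nonneg {Z : Matrix ι ι ℝ} (hZ : 0 ≤ Z) : Z ≤ Z.trace • 1 := by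
  refine le_of_forall_dotProduct_mulVec_le (isSymm_of_nonneg hZ) (isSymm_smul_one _) fun ξ => ?_
  calc ξ ⬝ᵥ Z *ᵥ ξ = (Z * Matrix.vecMulVec ξ ξ).trace := by
        rw [Matrix.mul_vecMulVec, Matrix.trace_vecMulVec, dotProduct_comm]
    _ ≤ (ξ ⬝ᵥ ξ) * Z.trace := trace_mul_le_of_le_smul_one hZ (vecMulVec_self_le_smul_one ξ)
    _ = ξ ⬝ᵥ (Z.trace • (1 : Matrix ι ι ℝ)) *ᵥ ξ := by
        rw [dotProduct_smul_one_mulVec, mul_comm]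

lemma le_smul_one_of_trace_mul_le {m Y : Matrix ι ι ℝ} {δ κ T H : ℝ} (hδ : 0 < δ)
    (hm : δ • 1 ≤ m) (hmT : m.trace ≤ T) (hκ : 0 ≤ κ) (hY : -(κ • 1) ≤ Y)
    (hH : (m * Y).trace ≤ H) :
    Y ≤ (δ⁻¹ * (H + κ * T)) • 1 := by
  have hZ : 0 ≤ Y + κ • 1 := neg_le_iff_add_nonneg.1 hY
  have htr : (Y + κ • 1).trace ≤ δ⁻¹ * (H + κ * T) := by
    rw [le_inv_mul_iff₀ hδ]
    calc δ * (Y + κ • 1).trace ≤ (m * (Y + κ • 1)).trace := mul_trace_le_trace_mul hm hZ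
      _ = (m * Y).trace + κ * m.trace := by simp [mul_add]
      _ ≤ H + κ * T := by gcongr
  calc Y ≤ Y + κ • 1 := le_add_of_nonneg_right (smul_one_nonneg hκ)
    _ ≤ (Y + κ • 1).trace • 1 := le_trace_smul_one_of_nonneg hZ
    _ ≤ (δ⁻¹ * (H + κ * T)) • 1 := smul_one_le_smul_one htr

/-- The second-order condition satisfied by the Hessians `X`, `Y` of `U`, `V` at a maximum point of
`(x, y) ↦ U x - V y - κ |x - y|²`. -/
def DoublingIneq (κ : ℝ) (X Y : Matrix ι ι ℝ) : Prop :=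
  ∀ ξ ζ : ι → ℝ, ξ ⬝ᵥ X *ᵥ ξ - ζ ⬝ᵥ Y *ᵥ ζ ≤ 2 * κ * ((ξ - ζ) ⬝ᵥ (ξ - ζ))

namespace DoublingIneq

variable {κ Λ δ : ℝ} {X Y : Matrix ι ι ℝ}

lemma le_smul_one (h : DoublingIneq κ X Y) (hX : X.IsSymm) : X ≤ (2 * κ) • 1 := by
  refine le_of_forall_dotProduct_mulVec_le hX (isSymm_smul_one _) fun ξ => ?_
  simpa [dotProduct_smul_one_mulVec] using h ξ 0

lemma neg_smul_one_le (h : DoublingIneq κ X Y) (hY : Y.IsSymm) : -((2 * κ) • 1) ≤ Y := by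
  refine le_of_forall_dotProduct_mulVec_le (isSymm_smul_one _).neg hY fun ζ => ?_
  have := h 0 ζ
  simp only [Matrix.mulVec_zero, dotProduct_zero, zero_sub, neg_dotProduct_neg] at this
  rw [Matrix.neg_mulVec, dotProduct_neg, dotProduct_smul_one_mulVec]
  linarith

-- Test with `ζ = ξ - s Y ξ`, where `s = (Λ + 2κ)⁻¹` is the optimal step.
lemma add_smul_mul_self_le (h : DoublingIneq κ X Y) (hX : X.IsSymm) (hY : Y.IsSymm)
    (hYΛ : Y ≤ Λ • 1) (hpos : 0 < Λ + 2 * κ) : X + (Λ + 2 * κ)⁻¹ • (Y * Y) ≤ Y := by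
  refine le_of_forall_dotProduct_mulVec_le
    (hX.add ((isSymm_of_nonneg (mul_self_nonneg_of_isSymm hY)).smul _)) hY fun ξ => ?_
  set s := (Λ + 2 * κ)⁻¹
  set w := Y *ᵥ ξ with hw
  have hξw : ξ ⬝ᵥ Y *ᵥ w = w ⬝ᵥ w := by rw [hw, Matrix.mulVec_mulVec, dotProduct_mul_self_mulVec hY]
  have hs : s ^ 2 * (Λ + 2 * κ) = s := by rw [sq, mul_assoc, inv_mul_cancel₀ hpos.ne', mul_one]
  have htest : ξ ⬝ᵥ X *ᵥ ξ - (ξ ⬝ᵥ w - 2 * s * (w ⬝ᵥ w) + s ^ 2 * (w ⬝ᵥ Y *ᵥ w))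
      ≤ 2 * κ * (s ^ 2 * (w ⬝ᵥ w)) := by
    convert h ξ (ξ - s • w) using 2
    · simp only [Matrix.mulVec_sub, Matrix.mulVec_smul, dotProduct_sub, sub_dotProduct,
        smul_dotProduct, dotProduct_smul, smul_eq_mul, hξw, ← hw]
      ring
    · simp only [sub_sub_cancel, smul_dotProduct, dotProduct_smul, smul_eq_mul]
      ring
  have hww : w ⬝ᵥ Y *ᵥ w ≤ Λ * (w ⬝ᵥ w) :=
    (dotProduct_mulVec_le_of_le hYΛ w).trans_eq (dotProduct_smul_one_mulVec Λ w)
  rw [Matrix.add_mulVec, Matrix.smul_mulVec, dotProduct_add, dotProduct_smul, smul_eq_mul,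
    dotProduct_mul_self_mulVec hY, ← hw]
  linear_combination htest + s ^ 2 * hww + (w ⬝ᵥ w) * hs

lemma trace_mul_sub_trace_mul_le (h : DoublingIneq κ X Y) (hX : X.IsSymm) (hY : Y.IsSymm)
    (hYΛ : Y ≤ Λ • 1) (hpos : 0 < Λ + 2 * κ) (hδ : 0 < δ) {m n : Matrix ι ι ℝ}
    (hm : δ • 1 ≤ m) (hn : n.IsSymm) :
    (m * X).trace - (n * Y).trace ≤ (Λ + 2 * κ) / (4 * δ) * ((m - n) * (m - n)).trace := by
  set L := Λ + 2 * κ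
  have hm0 : 0 ≤ m := (smul_one_nonneg hδ.le).trans hm
  have hmX : (m * X).trace + L⁻¹ * (m * (Y * Y)).trace ≤ (m * Y).trace := by
    simpa [mul_add] using
      trace_mul_le_trace_mul_of_le_right hm0 (h.add_smul_mul_self_le hX hY hYΛ hpos)
  have hmYY : δ * (Y * Y).trace ≤ (m * (Y * Y)).trace :=
    mul_trace_le_trace_mul hm (mul_self_nonneg_of_isSymm hY)
  have hyoung := trace_mul_le_young ((isSymm_of_smul_one_le hm).sub hn) hY (div_pos hδ hpos)
  have hdiv := mul_le_mul_of_nonneg_left hmYY (inv_pos.2 hpos).le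
  have hconst : (4 * (δ / L))⁻¹ = L / (4 * δ) := by rw [← mul_div_assoc, inv_div]
  rw [sub_mul, Matrix.trace_sub, hconst, div_mul_eq_mul_div, div_eq_inv_mul] at hyoung
  linarith

end DoublingIneq

end LinearAlgebra

section EuclideanBounds

variable {d : ℕ}

lemma vecNorm_eq_norm_toLp (v : Fin d → ℝ) : vecNorm v = ‖(WithLp.toLp 2 v : E d)‖ := by
  simp [vecNorm, EuclideanSpace.norm_eq]

lemma vecNorm_nonneg (v : Fin d → ℝ) : 0 ≤ vecNorm v := Real.sqrt_nonneg _

lemma vecNorm_neg (v : Fin d → ℝ) : vecNorm (-v) = vecNorm v := by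
  simp [vecNorm]

lemma abs_dotProduct_le_vecNorm_mul_vecNorm (v w : Fin d → ℝ) :
    |v ⬝ᵥ w| ≤ vecNorm v * vecNorm w := by
  rw [vecNorm_eq_norm_toLp, vecNorm_eq_norm_toLp, mul_comm]
  simpa [EuclideanSpace.inner_eq_star_dotProduct] using
    abs_real_inner_le_norm (WithLp.toLp 2 w : E d) (WithLp.toLp 2 v)

lemma clm_apply_eq_dotProduct (L : E d →L[ℝ] ℝ) (v : E d) :
    L v = (fun i => L (EuclideanSpace.single i 1)) ⬝ᵥ v := by
  conv_lhs => rw [← (EuclideanSpace.basisFun (Fin d) ℝ).sum_repr v, map_sum]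
  simp [dotProduct, mul_comm]

lemma vecNorm_clm_apply_single (L : E d →L[ℝ] ℝ) :
    vecNorm (fun i => L (EuclideanSpace.single i 1)) = ‖L‖ := by
  rw [← (InnerProductSpace.toDual ℝ (E d)).symm.norm_map L, vecNorm_eq_norm_toLp]
  congr 1
  ext i
  change L (EuclideanSpace.single i 1) = _
  rw [← InnerProductSpace.toDual_symm_apply, EuclideanSpace.inner_single_right]
  simp

lemma matNorm_sq_eq_trace {m : Fin d → Fin d → ℝ} (hm : (Matrix.of m).IsSymm) :
    matNorm m ^ 2 = (Matrix.of m * Matrix.of m).trace := by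
  rw [matNorm, Real.sq_sqrt (by positivity)]
  simp [Matrix.trace, Matrix.mul_apply, sq, fun i j => hm.apply i j]

lemma sum_sum_mul_eq_trace_mul (m : Fin d → Fin d → ℝ) {X : Matrix (Fin d) (Fin d) ℝ}
    (hX : X.IsSymm) : ∑ i, ∑ j, m i j * X i j = (Matrix.of m * X).trace := by
  simp [Matrix.trace, Matrix.mul_apply, fun i j => hX.apply i j]

lemma abs_entry_le_matNorm (m : Fin d → Fin d → ℝ) (i j : Fin d) : |m i j| ≤ matNorm m := by
  refine Real.abs_le_sqrt ?_
  calc m i j ^ 2 ≤ ∑ j, m i j ^ 2 :=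
        Finset.single_le_sum (fun j _ => sq_nonneg (m i j)) (Finset.mem_univ j)
    _ ≤ ∑ i, ∑ j, m i j ^ 2 :=
        Finset.single_le_sum (fun i _ => Finset.sum_nonneg fun j _ => sq_nonneg (m i j))
          (Finset.mem_univ i)

namespace memSdelta

variable {δ : ℝ} {m : Fin d → Fin d → ℝ}

lemma isSymm (hm : memSdelta δ m) : (Matrix.of m).IsSymm :=
  Matrix.ext fun i j => hm.1 j i

lemma smul_one_le (hm : memSdelta δ m) : δ • 1 ≤ Matrix.of m := by
  refine le_of_forall_dotProduct_mulVec_le (isSymm_smul_one _) hm.isSymm fun ξ => ?_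
  rw [dotProduct_smul_one_mulVec]
  convert (hm.2 ξ).1 using 1
  · simp [dotProduct, sq]
  · simp [dotProduct, Matrix.mulVec, Finset.mul_sum, mul_comm, mul_left_comm]

lemma nonneg (hm : memSdelta δ m) (hδ : 0 ≤ δ) : 0 ≤ Matrix.of m :=
  (smul_one_nonneg hδ).trans hm.smul_one_le

lemma trace_le (hm : memSdelta δ m) : (Matrix.of m).trace ≤ d * δ⁻¹ := by
  have hdiag : ∀ i, m i i ≤ δ⁻¹ := fun i => by
    simpa [Pi.single_apply] using (hm.2 (Pi.single i 1)).2
  simpa [Matrix.trace] using Finset.sum_le_sum fun i (_ : i ∈ Finset.univ) => hdiag i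

lemma le_diag (hm : memSdelta δ m) (i : Fin d) : δ ≤ m i i := by
  simpa [Pi.single_apply] using (hm.2 (Pi.single i 1)).1

end memSdelta

end EuclideanBounds

section LinearGrowth

variable {d : ℕ}

/-- One-sided linear growth of `P` at symmetric matrices: where the Hessian of `u` is bounded above
by a small multiple of `K`, it makes the term `P[u] - K` negative. -/
def HasLinearGrowth (Λ K₁ : ℝ) (P : (Fin d → Fin d → ℝ) → (Fin d → ℝ) → ℝ → ℝ) : Prop :=
  ∀ (X : Matrix (Fin d) (Fin d) ℝ) (p : Fin d → ℝ) (r c : ℝ), X.IsSymm → 0 ≤ c → X ≤ c • 1 →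
    P (fun i j => X i j) p r ≤ Λ * c + K₁ * vecNorm p + K₁ * |r|

lemma fderiv_apply_self_of_homogeneous {V : Type*} [NormedAddCommGroup V] [NormedSpace ℝ V]
    {g : V → ℝ} (hg : ∀ t : ℝ, 0 ≤ t → ∀ q, g (t • q) = t * g q) {q : V}
    (hq : DifferentiableAt ℝ g q) : fderiv ℝ g q q = g q := by
  have hray : HasDerivAt (fun t : ℝ => g (t • q)) (fderiv ℝ g q q) 1 := by
    have hline : HasDerivAt (fun t : ℝ => t • q) q 1 := by
      simpa using (hasDerivAt_id (1 : ℝ)).smul_const q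
    exact HasFDerivAt.comp_hasDerivAt (1 : ℝ) (by simpa using hq.hasFDerivAt) hline
  have hlin : HasDerivAt (fun t : ℝ => g (t • q)) (g q) 1 := by
    refine HasDerivAt.congr_of_eventuallyEq ((hasDerivAt_mul_const (g q)) ) ?_
    filter_upwards [lt_mem_nhds one_pos] with t ht using hg t ht.le q
  exact hray.unique hlin

lemma clm_apply_eq_sum_prod (L : (Fin d → Fin d → ℝ) × (Fin d → ℝ) × ℝ →L[ℝ] ℝ)
    (X : Fin d → Fin d → ℝ) (p : Fin d → ℝ) (r : ℝ) :
    L (X, p, r) = (∑ i, ∑ j, L (Pi.single i (Pi.single j 1), 0, 0) * X i j)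
      + (fun i => L (0, Pi.single i 1, 0)) ⬝ᵥ p + L (0, 0, 1) * r := by
  have hdecomp : (X, p, r)
      = (∑ i, ∑ j, X i j • (Pi.single i (Pi.single j (1 : ℝ)), (0 : Fin d → ℝ), (0 : ℝ)))
        + (∑ i, p i • ((0 : Fin d → Fin d → ℝ), Pi.single i (1 : ℝ), (0 : ℝ)))
        + r • ((0 : Fin d → Fin d → ℝ), (0 : Fin d → ℝ), (1 : ℝ)) := by
    ext <;> simp [Prod.fst_sum, Prod.snd_sum, Finset.sum_apply, Pi.single_apply]
  rw [hdecomp]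
  simp only [map_add, map_sum, map_smul, smul_eq_mul, dotProduct, mul_comm]

variable {δhat K₁ : ℝ} {P : (Fin d → Fin d → ℝ) → (Fin d → ℝ) → ℝ → ℝ}

lemma PAssump.fderiv_apply_le (hP : PAssump δhat K₁ P) (hδhat : 0 ≤ δhat)
    {q : (Fin d → Fin d → ℝ) × (Fin d → ℝ) × ℝ}
    (hq : DifferentiableAt ℝ (fun q : _ × _ × _ => P q.1 q.2.1 q.2.2) q)
    {X : Matrix (Fin d) (Fin d) ℝ} {c : ℝ} (hX : X.IsSymm) (hc : 0 ≤ c) (hXc : X ≤ c • 1)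
    (p : Fin d → ℝ) (r : ℝ) :
    fderiv ℝ (fun q : _ × _ × _ => P q.1 q.2.1 q.2.2) q (fun i j => X i j, p, r)
      ≤ d * δhat⁻¹ * c + K₁ * vecNorm p + K₁ * |r| := by
  obtain ⟨hS, hgrad, hneg, hlow⟩ := hP.2.2.2 q hq
  rw [clm_apply_eq_sum_prod, sum_sum_mul_eq_trace_mul _ hX]
  set L := fderiv ℝ (fun q : _ × _ × _ => P q.1 q.2.1 q.2.2) q
  have hsecond := (trace_mul_le_of_le_smul_one (hS.nonneg hδhat) hXc).trans
    (mul_le_mul_of_nonneg_left hS.trace_le hc)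
  have hfirst : (fun i => L (0, Pi.single i 1, 0)) ⬝ᵥ p ≤ K₁ * vecNorm p :=
    (le_abs_self _).trans <| (abs_dotProduct_le_vecNorm_mul_vecNorm _ _).trans <|
      mul_le_mul_of_nonneg_right hgrad (vecNorm_nonneg p)
  have hzeroth : L (0, 0, 1) * r ≤ K₁ * |r| := by
    have : |L (0, 0, 1)| ≤ K₁ := abs_le.2 ⟨hlow, by linarith⟩
    calc L (0, 0, 1) * r ≤ |L (0, 0, 1)| * |r| := (le_abs_self _).trans_eq (abs_mul _ _)
      _ ≤ K₁ * |r| := by gcongr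
  linarith [mul_comm c (d * δhat⁻¹)]

-- `P` is Lipschitz, so it is differentiable on a dense set, where Euler's identity applies.
lemma PAssump.hasLinearGrowth (hP : PAssump δhat K₁ P) (hδhat : 0 ≤ δhat) :
    HasLinearGrowth (d * δhat⁻¹) K₁ P := by
  intro X p r c hX hc hXc
  obtain ⟨-, hhom, ⟨C, hC⟩, -⟩ := id hP
  set g : (Fin d → Fin d → ℝ) × (Fin d → ℝ) × ℝ → ℝ := fun q => P q.1 q.2.1 q.2.2
  set z : (Fin d → Fin d → ℝ) × (Fin d → ℝ) × ℝ := (fun i j => X i j, p, r)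
  have hdense : Dense {q | DifferentiableAt ℝ g q} :=
    Measure.dense_of_ae (hC.ae_differentiableAt (μ := Measure.addHaar))
  have hnear : ∀ q, DifferentiableAt ℝ g q →
      g z ≤ d * δhat⁻¹ * c + K₁ * vecNorm p + K₁ * |r| + 2 * C * dist z q := by
    intro q hq
    have heuler : fderiv ℝ g q q = g q :=
      fderiv_apply_self_of_homogeneous (fun t ht q => hhom t ht q.1 q.2.1 q.2.2) hq
    have hlip : g z - g q ≤ C * dist z q := (le_abs_self _).trans (hC.dist_le_mul z q)
    have hlin : fderiv ℝ g q q - fderiv ℝ g q z ≤ C * dist z q := by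
      rw [← map_sub, dist_comm, dist_eq_norm]
      exact (le_abs_self _).trans ((fderiv ℝ g q).le_of_opNorm_le
        (norm_fderiv_le_of_lipschitz ℝ hC) _)
    linarith [hP.fderiv_apply_le hδhat hq hX hc hXc p r]
  obtain ⟨q, hq, hlim⟩ := mem_closure_iff_seq_limit.1 (hdense z)
  have hbound : Tendsto
      (fun n => d * δhat⁻¹ * c + K₁ * vecNorm p + K₁ * |r| + 2 * C * dist z (q n)) atTop
      (𝓝 (d * δhat⁻¹ * c + K₁ * vecNorm p + K₁ * |r| + 2 * C * dist z z)) :=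
    ((tendsto_const_nhds.dist hlim).const_mul _).const_add _
  rw [dist_self, mul_zero, add_zero] at hbound
  exact ge_of_tendsto' hbound fun n => hnear (q n) (hq n)

end LinearGrowth

section Calculus

variable {d : ℕ}

/-- The Hessian matrix of `u` at `x`. -/
def hess (u : E d → ℝ) (x : E d) : Matrix (Fin d) (Fin d) ℝ := Matrix.of (D2 u x)

lemma fderiv_apply_eq_dotProduct (u : E d → ℝ) (x : E d) (ξ : Fin d → ℝ) :
    fderiv ℝ u x (WithLp.toLp 2 ξ) = D1 u x ⬝ᵥ ξ :=
  clm_apply_eq_dotProduct _ _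

lemma hess_apply {u : E d → ℝ} {x : E d} (hu : ContDiffAt ℝ 2 u x) (i j : Fin d) :
    hess u x i j =
      iteratedFDeriv ℝ 2 u x ![EuclideanSpace.single i 1, EuclideanSpace.single j 1] := by
  have hdiff : DifferentiableAt ℝ (fderiv ℝ u) x :=
    (hu.fderiv_right (m := 1) (by norm_num)).differentiableAt (by norm_num)
  rw [iteratedFDeriv_two_apply, hess, Matrix.of_apply, D2,
    fderiv_clm_apply hdiff (differentiableAt_const _)]
  simp

lemma isSymm_hess {u : E d → ℝ} {x : E d} (hu : ContDiffAt ℝ 2 u x) : (hess u x).IsSymm := by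
  refine Matrix.ext fun i j => ?_
  rw [Matrix.transpose_apply, hess_apply hu, hess_apply hu, iteratedFDeriv_two_apply,
    iteratedFDeriv_two_apply]
  exact hu.isSymmSndFDerivAt (by simp) _ _

section Arithmetic

variable {u v : E d → ℝ} {x : E d}

lemma D1_add (hu : DifferentiableAt ℝ u x) (hv : DifferentiableAt ℝ v x) :
    D1 (u + v) x = D1 u x + D1 v x := by
  ext i; simp [D1, fderiv_add hu hv]

lemma D1_sub (hu : DifferentiableAt ℝ u x) (hv : DifferentiableAt ℝ v x) :
    D1 (u - v) x = D1 u x - D1 v x := by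
  ext i; simp [D1, fderiv_sub hu hv]

lemma D1_neg (v : E d → ℝ) (x : E d) : D1 (-v) x = -D1 v x := by
  ext i; simp [D1, fderiv_neg]

lemma D1_const_smul (r : ℝ) (u : E d → ℝ) (x : E d) : D1 (r • u) x = r • D1 u x := by
  ext i; simp [D1, fderiv_const_smul_field]

lemma D1_clm (L : E d →L[ℝ] ℝ) (x : E d) : D1 L x = fun i => L (EuclideanSpace.single i 1) := by
  ext i; rw [D1, L.fderiv]

lemma hess_add (hu : ContDiffAt ℝ 2 u x) (hv : ContDiffAt ℝ 2 v x) :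
    hess (u + v) x = hess u x + hess v x := by
  ext i j
  rw [Matrix.add_apply, hess_apply (u := u + v) (hu.add hv), hess_apply hu, hess_apply hv,
    iteratedFDeriv_add_apply hu hv, add_apply]

lemma hess_neg (v : E d → ℝ) (x : E d) : hess (-v) x = -hess v x := by
  ext i j
  change D1 (fun y => D1 (-v) y j) x i = -D1 (fun y => D1 v y j) x i
  simp only [D1_neg]
  exact congrFun (D1_neg (fun y => D1 v y j) x) i

lemma hess_sub (hu : ContDiffAt ℝ 2 u x) (hv : ContDiffAt ℝ 2 v x) :
    hess (u - v) x = hess u x - hess v x := by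
  rw [sub_eq_add_neg, hess_add (v := -v) hu hv.neg, hess_neg, ← sub_eq_add_neg]

lemma hess_const_smul (r : ℝ) (hu : ContDiffAt ℝ 2 u x) : hess (r • u) x = r • hess u x := by
  ext i j
  rw [Matrix.smul_apply, hess_apply (u := r • u) (hu.const_smul r), hess_apply hu,
    iteratedFDeriv_const_smul_apply hu, smul_apply]

lemma hess_clm (L : E d →L[ℝ] ℝ) (x : E d) : hess L x = 0 := by
  ext i j
  change D1 (fun y => D1 L y j) x i = 0
  simp only [D1_clm]
  simp [D1]

lemma D1_norm_sub_sq (x₀ x : E d) : D1 (fun y => ‖y - x₀‖ ^ 2) x = (2 : ℝ) • ⇑(x - x₀) := by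
  ext i
  have hderiv : HasFDerivAt (fun y : E d => ‖y - x₀‖ ^ 2) _ x :=
    ((hasFDerivAt_id x).sub_const x₀).norm_sq
  simp [D1, hderiv.fderiv, EuclideanSpace.inner_single_right]

lemma hess_norm_sub_sq (x₀ x : E d) : hess (fun y => ‖y - x₀‖ ^ 2) x = (2 : ℝ) • 1 := by
  ext i j
  change D1 (fun y => D1 (fun y => ‖y - x₀‖ ^ 2) y j) x i = _
  have hderiv : HasFDerivAt (fun y : E d => 2 * (y j - x₀ j))
      ((2 : ℝ) • (EuclideanSpace.proj j : E d →L[ℝ] ℝ)) x :=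
    ((EuclideanSpace.proj j : E d →L[ℝ] ℝ).hasFDerivAt.sub_const (x₀ j)).const_mul 2
  simp only [D1_norm_sub_sq, Pi.smul_apply, smul_eq_mul, PiLp.sub_apply]
  simp [D1, hderiv.fderiv, Matrix.one_apply, eq_comm]

end Arithmetic

/-- `g` is twice differentiable at `t₀`, with first and second derivatives `p` and `q` there. -/
def HasJetAt (g : ℝ → ℝ) (p q t₀ : ℝ) : Prop :=
  ∃ g' : ℝ → ℝ, (∀ᶠ t in 𝓝 t₀, HasDerivAt g (g' t) t) ∧ g' t₀ = p ∧ HasDerivAt g' q t₀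

namespace HasJetAt

variable {g h : ℝ → ℝ} {p q r s t₀ : ℝ}

lemma sub (hg : HasJetAt g p q t₀) (hh : HasJetAt h r s t₀) :
    HasJetAt (g - h) (p - r) (q - s) t₀ := by
  obtain ⟨g', hg, rfl, hg'⟩ := hg
  obtain ⟨h', hh, rfl, hh'⟩ := hh
  exact ⟨g' - h', by filter_upwards [hg, hh] with t hg hh using hg.sub hh, rfl, hg'.sub hh'⟩

lemma const_mul (c : ℝ) (hg : HasJetAt g p q t₀) :
    HasJetAt (fun t => c * g t) (c * p) (c * q) t₀ := by
  obtain ⟨g', hg, rfl, hg'⟩ := hg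
  exact ⟨fun t => c * g' t, hg.mono fun t hg => hg.const_mul c, rfl, hg'.const_mul c⟩

-- If the second derivative were positive, `t₀` would also be a local minimum, so `g` would be
-- locally constant.
lemma of_isLocalMax (hg : HasJetAt g p q t₀) (hmax : IsLocalMax g t₀) : p = 0 ∧ q ≤ 0 := by
  obtain ⟨g', hg, rfl, hg'⟩ := hg
  have hderiv : deriv g =ᶠ[𝓝 t₀] g' := hg.mono fun t ht => ht.deriv
  have hzero : g' t₀ = 0 := hmax.hasDerivAt_eq_zero hg.self_of_nhds
  refine ⟨hzero, not_lt.1 fun hq => ?_⟩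
  have hmin : IsLocalMin g t₀ := isLocalMin_of_deriv_deriv_pos
    (by rwa [hderiv.deriv_eq, hg'.deriv]) (by rw [hderiv.eq_of_nhds, hzero])
    hg.self_of_nhds.continuousAt
  have hconst : g =ᶠ[𝓝 t₀] fun _ => g t₀ := by
    filter_upwards [hmin, hmax] with t hle hge using le_antisymm hge hle
  have hg'_zero : g' =ᶠ[𝓝 t₀] fun _ => 0 := by
    simpa using hderiv.symm.trans hconst.deriv
  exact hq.ne' (hg'.unique ((hasDerivAt_const t₀ 0).congr_of_eventuallyEq hg'_zero))

end HasJetAt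

lemma hasJetAt_line {u : E d → ℝ} {x : E d} (hu : ContDiffAt ℝ 2 u x) (ξ : Fin d → ℝ) :
    HasJetAt (fun t => u (x + t • WithLp.toLp 2 ξ)) (D1 u x ⬝ᵥ ξ) (ξ ⬝ᵥ hess u x *ᵥ ξ) 0 := by
  have hline : ∀ t : ℝ, HasDerivAt (fun t : ℝ => x + t • (WithLp.toLp 2 ξ : E d))
      (WithLp.toLp 2 ξ) t := fun t => by
    simpa using ((hasDerivAt_id t).smul_const (WithLp.toLp 2 ξ : E d)).const_add x
  have hline_zero : x + (0 : ℝ) • (WithLp.toLp 2 ξ : E d) = x := by simp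
  refine ⟨fun t => D1 u (x + t • WithLp.toLp 2 ξ) ⬝ᵥ ξ, ?_, by simp, ?_⟩
  · have hdiff : ∀ᶠ y in 𝓝 x, DifferentiableAt ℝ u y :=
      (hu.eventually (by simp)).mono fun y hy => hy.differentiableAt (by norm_num)
    have hlim := (hline 0).continuousAt.tendsto
    rw [hline_zero] at hlim
    filter_upwards [hlim.eventually hdiff] with t ht
    rw [← fderiv_apply_eq_dotProduct]
    exact ht.hasFDerivAt.comp_hasDerivAt t (hline t)
  · have hpartial : ∀ j, HasDerivAt (fun t : ℝ => D1 u (x + t • WithLp.toLp 2 ξ) j)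
        ((fun i => hess u x i j) ⬝ᵥ ξ) 0 := fun j => by
      have hdiff : DifferentiableAt ℝ (fun y => D1 u y j) x :=
        ((hu.fderiv_right (m := 1) (by norm_num)).differentiableAt (by norm_num)).clm_apply
          (differentiableAt_const _)
      rw [← hline_zero] at hdiff
      refine (hdiff.hasFDerivAt.comp_hasDerivAt (0 : ℝ) (hline 0)).congr_deriv ?_
      rw [hline_zero, fderiv_apply_eq_dotProduct]
      rfl
    refine (HasDerivAt.fun_sum fun j (_ : j ∈ Finset.univ) =>
      (hpartial j).mul_const (ξ j)).congr_deriv ?_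
    rw [Matrix.dotProduct_mulVec]
    simp only [dotProduct, Matrix.vecMul, mul_comm]

lemma D1_eq_and_doublingIneq_of_isLocalMax {U V : E d → ℝ} {x y : E d} {κ : ℝ}
    (hU : ContDiffAt ℝ 2 U x) (hV : ContDiffAt ℝ 2 V y)
    (hmax : IsLocalMax (fun q : E d × E d => U q.1 - V q.2 - κ * ‖q.1 - q.2‖ ^ 2) (x, y)) :
    D1 U x = D1 V y ∧ DoublingIneq κ (hess U x) (hess V y) := by
  have hjet : ∀ ξ ζ : Fin d → ℝ,
      D1 U x ⬝ᵥ ξ - D1 V y ⬝ᵥ ζ - κ * ((2 : ℝ) • ⇑(x - y) ⬝ᵥ (ξ - ζ)) = 0 ∧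
      ξ ⬝ᵥ hess U x *ᵥ ξ - ζ ⬝ᵥ hess V y *ᵥ ζ
        - κ * ((ξ - ζ) ⬝ᵥ ((2 : ℝ) • 1 : Matrix (Fin d) (Fin d) ℝ) *ᵥ (ξ - ζ)) ≤ 0 := by
    intro ξ ζ
    have hpenalty := hasJetAt_line (x := x - y) (u := fun z => ‖z - 0‖ ^ 2)
      ((contDiff_id.sub contDiff_const).norm_sq ℝ).contDiffAt (ξ - ζ)
    rw [D1_norm_sub_sq, hess_norm_sub_sq, sub_zero] at hpenalty
    refine (((hasJetAt_line hU ξ).sub (hasJetAt_line hV ζ)).sub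
      (hpenalty.const_mul κ)).of_isLocalMax ?_
    have hcont : ContinuousAt (fun t : ℝ => (x + t • (WithLp.toLp 2 ξ : E d),
      y + t • (WithLp.toLp 2 ζ : E d))) 0 := by fun_prop
    have hcomp := IsLocalMax.comp_continuous (g := fun t : ℝ => (x + t • (WithLp.toLp 2 ξ : E d),
      y + t • (WithLp.toLp 2 ζ : E d))) (b := (0 : ℝ)) (by simpa using hmax) hcont
    convert hcomp using 1
    funext t
    have : x - y + t • (WithLp.toLp 2 (ξ - ζ) : E d) - 0
        = x + t • WithLp.toLp 2 ξ - (y + t • WithLp.toLp 2 ζ) := by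
      rw [WithLp.toLp_sub]; module
    simp only [Pi.sub_apply, Function.comp_apply, this]
  refine ⟨funext fun i => ?_, fun ξ ζ => ?_⟩
  · have hfirst := (hjet (Pi.single i 1) (Pi.single i 1)).1
    simpa [sub_eq_zero] using hfirst
  · have hsecond := (hjet ξ ζ).2
    rw [dotProduct_smul_one_mulVec] at hsecond
    linarith

end Calculus

section DoublingVariables

lemma exists_isLocalMax_doubled {V : Type*} [NormedAddCommGroup V] [ProperSpace V]
    {U W : V → ℝ} {x₀ : V} {ρ κ μ T : ℝ} (hρ : 0 < ρ) (hκ : 0 < κ) (hμ : 0 < μ)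
    (hT : 0 ≤ T) (hTμ : T ^ 2 ≤ κ * μ * ρ ^ 2) (hTκ : 2 * T < κ * ρ)
    (hU : ContinuousOn U (Metric.closedBall x₀ ρ))
    (hW : ContinuousOn W (Metric.closedBall x₀ ρ))
    (hW_lip : ∀ x ∈ Metric.closedBall x₀ ρ, ∀ y ∈ Metric.closedBall x₀ ρ,
      W x - W y ≤ T * ‖x - y‖)
    (hmax : ∀ x ∈ Metric.closedBall x₀ ρ, U x - W x ≤ U x₀ - W x₀) :
    ∃ x ∈ Metric.ball x₀ ρ, ∃ y ∈ Metric.ball x₀ ρ, ‖x - y‖ ≤ T / κ ∧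
      U x₀ - W x₀ ≤ U x - W y ∧
      IsLocalMax (fun q : V × V => U q.1 - μ * ‖q.1 - x₀‖ ^ 2 - W q.2 - κ * ‖q.1 - q.2‖ ^ 2)
        (x, y) := by
  set S := Metric.closedBall x₀ ρ
  set Φ : V × V → ℝ := fun q => U q.1 - μ * ‖q.1 - x₀‖ ^ 2 - W q.2 - κ * ‖q.1 - q.2‖ ^ 2 with hΦ
  have hx₀ : x₀ ∈ S := Metric.mem_closedBall_self hρ.le
  have hΦ_cont : ContinuousOn Φ (S ×ˢ S) :=
    ((((hU.comp continuousOn_fst fun q hq => hq.1).sub (by fun_prop)).sub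
      (hW.comp continuousOn_snd fun q hq => hq.2)).sub (by fun_prop))
  obtain ⟨⟨x, y⟩, ⟨hx, hy⟩, hxy_max⟩ := ((isCompact_closedBall x₀ ρ).prod
    (isCompact_closedBall x₀ ρ)).exists_isMaxOn ⟨(x₀, x₀), hx₀, hx₀⟩ hΦ_cont
  have hbase : Φ (x₀, x₀) ≤ Φ (x, y) := hxy_max ⟨hx₀, hx₀⟩
  simp only [hΦ, sub_self, norm_zero, zero_pow two_ne_zero, mul_zero, sub_zero] at hbase
  have hpenalty : μ * ‖x - x₀‖ ^ 2 + κ * ‖x - y‖ ^ 2 ≤ T * ‖x - y‖ := by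
    linarith [hmax x hx, hW_lip x hx y hy]
  have hclose : ‖x - y‖ ≤ T / κ := by
    rw [le_div_iff₀' hκ]
    rcases (norm_nonneg (x - y)).eq_or_lt with hzero | hpos
    · rwa [← hzero, mul_zero]
    · refine le_of_mul_le_mul_right ?_ hpos
      linarith [mul_nonneg hμ.le (sq_nonneg ‖x - x₀‖), mul_assoc κ ‖x - y‖ ‖x - y‖,
        sq ‖x - y‖]
  have hxy : ‖x - y‖ < ρ / 2 := hclose.trans_lt (by rw [div_lt_iff₀ hκ]; linarith)
  have hcenter : ‖x - x₀‖ ≤ ρ / 2 := by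
    refine le_of_mul_le_mul_left ?_ (mul_pos hκ hμ) |> (sq_le_sq₀ (norm_nonneg _) (by linarith)).1
    nlinarith [sq_nonneg (T / 2 - κ * ‖x - y‖)]
  have hx_ball : x ∈ Metric.ball x₀ ρ := mem_ball_iff_norm.2 (by linarith)
  have hy_ball : y ∈ Metric.ball x₀ ρ := mem_ball_iff_norm.2 <| by
    linarith [norm_sub_le_norm_sub_add_norm_sub y x x₀, norm_sub_rev y x]
  refine ⟨x, hx_ball, y, hy_ball, hclose, ?_, hxy_max.isLocalMax ?_⟩
  · nlinarith [sq_nonneg ‖x - x₀‖, sq_nonneg ‖x - y‖]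
  · exact prod_mem_nhds
      (mem_of_superset (Metric.isOpen_ball.mem_nhds hx_ball) Metric.ball_subset_closedBall)
      (mem_of_superset (Metric.isOpen_ball.mem_nhds hy_ball) Metric.ball_subset_closedBall)

variable {d : ℕ}

/-- `(x, y)` is a pair of nearby points produced by doubling the variables at an interior maximum
`x₀` of `w - v`, with penalties `μ|x - x₀|²` and `κ|x - y|²`: the first- and second-order
conditions there, and the loss in the value of `w - v`. -/
structure IsDoubledMax (κ μ r M : ℝ) (w v : E d → ℝ) (x₀ x y : E d) : Prop where
  norm_sub_le : ‖x - y‖ ≤ r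
  D1_eq : D1 w x = D1 v y + (2 * μ) • ⇑(x - x₀)
  doublingIneq : DoublingIneq κ (hess w x - (2 * μ) • 1) (hess v y)
  value_le : w x₀ - v x₀ - M * ‖x - y‖ ≤ w x - v y

lemma D1_eq_and_doublingIneq_of_isLocalMax_penalized {w v : E d → ℝ} {x₀ x y : E d} {κ μ : ℝ}
    (L : E d →L[ℝ] ℝ) (hw : ContDiffAt ℝ 2 w x) (hv : ContDiffAt ℝ 2 v y)
    (hmax : IsLocalMax (fun q : E d × E d => w q.1 - L q.1 - μ * ‖q.1 - x₀‖ ^ 2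
      - (v q.2 - L q.2) - κ * ‖q.1 - q.2‖ ^ 2) (x, y)) :
    D1 w x = D1 v y + (2 * μ) • ⇑(x - x₀) ∧
      DoublingIneq κ (hess w x - (2 * μ) • 1) (hess v y) := by
  have hL : ∀ z, ContDiffAt ℝ 2 L z := fun z => L.contDiff.contDiffAt
  have hwL : ContDiffAt ℝ 2 (w - ⇑L) x := hw.sub (hL x)
  have hvL : ContDiffAt ℝ 2 (v - ⇑L) y := hv.sub (hL y)
  have hsq : ContDiffAt ℝ 2 (fun z : E d => ‖z - x₀‖ ^ 2) x :=
    ((contDiff_id.sub contDiff_const).norm_sq ℝ).contDiffAt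
  have hμsq : ContDiffAt ℝ 2 (μ • fun z : E d => ‖z - x₀‖ ^ 2) x := hsq.const_smul μ
  have hdiff : ∀ {g : E d → ℝ} {z : E d}, ContDiffAt ℝ 2 g z → DifferentiableAt ℝ g z :=
    fun hg => hg.differentiableAt (by norm_num)
  obtain ⟨hfirst, hsecond⟩ := D1_eq_and_doublingIneq_of_isLocalMax
    (U := w - ⇑L - μ • fun z : E d => ‖z - x₀‖ ^ 2) (V := v - ⇑L) (hwL.sub hμsq) hvL hmax
  constructor
  · rw [D1_sub (hdiff hwL) (hdiff hμsq), D1_sub (hdiff hw) L.differentiableAt, D1_const_smul,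
      D1_norm_sub_sq, D1_sub (hdiff hv) L.differentiableAt, D1_clm, D1_clm, smul_smul,
      mul_comm μ] at hfirst
    linear_combination hfirst
  · rwa [hess_sub hwL hμsq, hess_sub hw (hL x), hess_const_smul μ hsq, hess_norm_sub_sq,
      hess_sub hv (hL y), hess_clm, hess_clm, sub_zero, sub_zero, smul_smul, mul_comm μ] at hsecond

-- Subtracting the linear part of `v` at `x₀` from both functions leaves `w - v` unchanged and
-- gives `v` the small Lipschitz constant `T`.
lemma exists_isDoubledMax {w v : E d → ℝ} {x₀ : E d} {ρ κ μ T : ℝ}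
    (hρ : 0 < ρ) (hκ : 0 < κ) (hμ : 0 < μ)
    (hTμ : T ^ 2 ≤ κ * μ * ρ ^ 2) (hTκ : 2 * T < κ * ρ)
    (hw : ∀ x ∈ Metric.closedBall x₀ ρ, ContDiffAt ℝ 2 w x)
    (hv : ∀ x ∈ Metric.closedBall x₀ ρ, ContDiffAt ℝ 2 v x)
    (hDv : ∀ x ∈ Metric.closedBall x₀ ρ, ‖fderiv ℝ v x - fderiv ℝ v x₀‖ ≤ T)
    (hmax : ∀ x ∈ Metric.closedBall x₀ ρ, w x - v x ≤ w x₀ - v x₀) :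
    ∃ x ∈ Metric.ball x₀ ρ, ∃ y ∈ Metric.ball x₀ ρ,
      IsDoubledMax κ μ (T / κ) ‖fderiv ℝ v x₀‖ w v x₀ x y := by
  set L := fderiv ℝ v x₀
  have hcont : ∀ {g : E d → ℝ}, (∀ x ∈ Metric.closedBall x₀ ρ, ContDiffAt ℝ 2 g x) →
      ContinuousOn (fun x => g x - L x) (Metric.closedBall x₀ ρ) := fun hg x hx =>
    ((hg x hx).continuousAt.sub L.continuous.continuousAt).continuousWithinAt
  have hv_lip : ∀ x ∈ Metric.closedBall x₀ ρ, ∀ y ∈ Metric.closedBall x₀ ρ,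
      v x - L x - (v y - L y) ≤ T * ‖x - y‖ := fun x hx y hy => by
    have hmean := Convex.norm_image_sub_le_of_norm_fderiv_le' (𝕜 := ℝ)
      (fun z hz => (hv z hz).differentiableAt (by norm_num)) hDv (convex_closedBall x₀ ρ) hy hx
    rw [map_sub] at hmean
    linarith [(abs_le.1 hmean).2]
  have hT : 0 ≤ T := (norm_nonneg _).trans (hDv x₀ (Metric.mem_closedBall_self hρ.le))
  obtain ⟨x, hx, y, hy, hxy, hval, hlocal⟩ := exists_isLocalMax_doubled hρ hκ hμ hT hTμ hTκ
    (hcont hw) (hcont hv) hv_lip fun x hx => by simpa using hmax x hx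
  obtain ⟨hfirst, hsecond⟩ := D1_eq_and_doublingIneq_of_isLocalMax_penalized L
    (hw x (Metric.ball_subset_closedBall hx)) (hv y (Metric.ball_subset_closedBall hy)) hlocal
  refine ⟨x, hx, y, hy, hxy, hfirst, hsecond, ?_⟩
  have hLxy : |L x - L y| ≤ ‖L‖ * ‖x - y‖ := map_sub L x y ▸ L.le_opNorm (x - y)
  linarith [(abs_le.1 hLxy).1]

end DoublingVariables

section Isaacs

variable {d : ℕ}

/-- The quantitative part of the assumptions on the coefficients: ellipticity, boundedness, the
Hölder exponent `γ` of `a` and the modulus `ω` of `b`, `c`, `f`. -/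
structure CoeffBounds {A B : Type} (δ K₀ γ : ℝ) (ω : ℝ → ℝ)
    (a : A → B → E d → Fin d → Fin d → ℝ) (b : A → B → E d → Fin d → ℝ)
    (c f : A → B → E d → ℝ) : Prop where
  memSdelta : ∀ α β x, memSdelta δ (a α β x)
  matNorm_le : ∀ α β x, matNorm (a α β x) ≤ K₀
  vecNorm_le : ∀ α β x, vecNorm (b α β x) ≤ K₀
  nonneg : ∀ α β x, 0 ≤ c α β x
  le : ∀ α β x, c α β x ≤ K₀
  abs_source_le : ∀ α β x, |f α β x| ≤ K₀
  matNorm_sub_le : ∀ α β x y, matNorm (a α β x - a α β y) ≤ K₀ * ‖x - y‖ ^ γ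
  vecNorm_sub_le : ∀ α β x y, vecNorm (b α β x - b α β y) ≤ K₀ * ω ‖x - y‖
  abs_sub_le : ∀ α β x y, |c α β x - c α β y| ≤ K₀ * ω ‖x - y‖
  abs_source_sub_le : ∀ α β x y, |f α β x - f α β y| ≤ K₀ * ω ‖x - y‖

lemma CoeffAssump.coeffBounds {A B : Type} [MetricSpace A] [MetricSpace B] {δ K₀ γ : ℝ}
    {ω : ℝ → ℝ} {a : A → B → E d → Fin d → Fin d → ℝ} {b : A → B → E d → Fin d → ℝ}
    {c f : A → B → E d → ℝ} (h : CoeffAssump δ K₀ γ ω a b c f) : CoeffBounds δ K₀ γ ω a b c f :=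
  let ⟨ha, ha', hb, hc, hf, _, _, haγ, hbω, hcω, hfω⟩ := h
  ⟨ha, ha', hb, fun α β x => (hc α β x).1, fun α β x => (hc α β x).2, hf, haγ, hbω, hcω, hfω⟩

variable {A B : Type} {δ K₀ γ : ℝ} {ω : ℝ → ℝ} {a : A → B → E d → Fin d → Fin d → ℝ}
  {b : A → B → E d → Fin d → ℝ} {c f : A → B → E d → ℝ}

lemma Lop_eq (α : A) (β : B) {u : E d → ℝ} {x : E d} (hu : (hess u x).IsSymm) :
    Lop a b c α β u x
      = (Matrix.of (a α β x) * hess u x).trace + b α β x ⬝ᵥ D1 u x - c α β x * u x := by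
  rw [← sum_sum_mul_eq_trace_mul _ hu]
  rfl

lemma CoeffBounds.exists_abs_Lop_add_le (h : CoeffBounds δ K₀ γ ω a b c f) (u : E d → ℝ)
    (x : E d) : ∃ C : ℝ, ∀ α β, |Lop a b c α β u x + f α β x| ≤ C := by
  refine ⟨(∑ i, ∑ j, K₀ * |D2 u x i j|) + K₀ * vecNorm (D1 u x) + K₀ * |u x| + K₀,
    fun α β => ?_⟩
  have hsecond : |∑ i, ∑ j, a α β x i j * D2 u x i j| ≤ ∑ i, ∑ j, K₀ * |D2 u x i j| := by
    refine (Finset.abs_sum_le_sum_abs _ _).trans (Finset.sum_le_sum fun i _ => ?_)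
    refine (Finset.abs_sum_le_sum_abs _ _).trans (Finset.sum_le_sum fun j _ => ?_)
    rw [abs_mul]
    gcongr
    exact (abs_entry_le_matNorm _ i j).trans (h.matNorm_le α β x)
  have hfirst : |b α β x ⬝ᵥ D1 u x| ≤ K₀ * vecNorm (D1 u x) :=
    (abs_dotProduct_le_vecNorm_mul_vecNorm _ _).trans
      (mul_le_mul_of_nonneg_right (h.vecNorm_le α β x) (vecNorm_nonneg _))
  have hzeroth : |c α β x * u x| ≤ K₀ * |u x| := by
    rw [abs_mul, abs_of_nonneg (h.nonneg α β x)]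
    gcongr
    exact h.le α β x
  exact (abs_add_le _ _).trans (add_le_add ((abs_sub _ _).trans (add_le_add
    ((abs_add_le _ _).trans (add_le_add hsecond hfirst)) hzeroth)) (h.abs_source_le α β x))

lemma exists_lt_and_lt_of_iSup_iInf [Nonempty A] [Nonempty B] {g h : A → B → ℝ} {C θ : ℝ}
    (hg : ∀ α β, |g α β| ≤ C) (hh : ∀ α β, |h α β| ≤ C) (hθ : 0 < θ)
    (hg_nonneg : 0 ≤ ⨆ α, ⨅ β, g α β) (hh_nonpos : ⨆ α, ⨅ β, h α β ≤ 0) :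
    ∃ α β, -θ < g α β ∧ h α β < θ := by
  have hbelow : ∀ {g : A → B → ℝ}, (∀ α β, |g α β| ≤ C) → ∀ α, BddBelow (range (g α)) :=
    fun hg α => ⟨-C, forall_mem_range.2 fun β => (abs_le.1 (hg α β)).1⟩
  have habove : BddAbove (range fun α => ⨅ β, h α β) := by
    refine ⟨C, forall_mem_range.2 fun α => ?_⟩
    exact (ciInf_le (hbelow hh α) (Classical.arbitrary B)).trans (abs_le.1 (hh α _)).2
  obtain ⟨α, hα⟩ := exists_lt_of_lt_ciSup ((neg_neg_of_pos hθ).trans_le hg_nonneg)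
  obtain ⟨β, hβ⟩ := exists_lt_of_ciInf_lt
    ((le_ciSup habove α).trans_lt (hh_nonpos.trans_lt hθ))
  exact ⟨α, β, hα.trans_le (ciInf_le (hbelow hg α) β), hβ⟩

lemma CoeffBounds.exists_lt_Lop_and_Lop_lt [Nonempty A] [Nonempty B]
    (h : CoeffBounds δ K₀ γ ω a b c f) {u v : E d → ℝ} {x y : E d} {θ : ℝ} (hθ : 0 < θ)
    (hu : 0 ≤ Fop a b c f u x) (hv : Fop a b c f v y ≤ 0) :
    ∃ α β, -θ < Lop a b c α β u x + f α β x ∧ Lop a b c α β v y + f α β y < θ := by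
  obtain ⟨Cu, hCu⟩ := h.exists_abs_Lop_add_le u x
  obtain ⟨Cv, hCv⟩ := h.exists_abs_Lop_add_le v y
  exact exists_lt_and_lt_of_iSup_iInf (fun α β => (hCu α β).trans (le_max_left Cu Cv))
    (fun α β => (hCv α β).trans (le_max_right Cu Cv)) hθ hu hv

end Isaacs

section Barrier

variable {d : ℕ}

/-- `Ψ` is a bounded convex barrier on `S`: every uniformly elliptic operator `m_{ij}D_{ij} +
p_iD_i` with `m ∈ S_δ` and `|p| ≤ K₀` is at least `1` on it. -/
structure IsBarrier (δ K₀ C : ℝ) (S : Set (E d)) (Ψ : E d → ℝ) : Prop where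
  contDiff : ContDiff ℝ 2 Ψ
  nonneg : ∀ x ∈ S, 0 ≤ Ψ x
  le : ∀ x ∈ S, Ψ x ≤ C
  hess_nonneg : ∀ x ∈ S, 0 ≤ hess Ψ x
  one_le : ∀ x ∈ S, ∀ m p, memSdelta δ m → vecNorm p ≤ K₀ →
    1 ≤ (Matrix.of m * hess Ψ x).trace + p ⬝ᵥ D1 Ψ x

lemma IsBarrier.mono {δ K₀ C : ℝ} {S T : Set (E d)} {Ψ : E d → ℝ} (h : IsBarrier δ K₀ C T Ψ)
    (hST : S ⊆ T) : IsBarrier δ K₀ C S Ψ :=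
  ⟨h.contDiff, fun x hx => h.nonneg x (hST hx), fun x hx => h.le x (hST hx),
    fun x hx => h.hess_nonneg x (hST hx), fun x hx => h.one_le x (hST hx)⟩

lemma D1_exp_coord (k : Fin d) (s r c : ℝ) (x : E d) :
    D1 (fun y => c * Real.exp (r * (y k + s))) x
      = Pi.single k (c * r * Real.exp (r * (x k + s))) := by
  have hderiv : HasFDerivAt (fun y : E d => c * Real.exp (r * (y k + s))) _ x :=
    ((((EuclideanSpace.proj k : E d →L[ℝ] ℝ).hasFDerivAt.add_const s).const_mul r).exp).const_mul c
  ext i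
  rw [D1, hderiv.fderiv]
  by_cases hik : i = k
  · subst hik
    simp
    ring
  · simp [hik, Ne.symm hik]

lemma hess_exp_coord (k : Fin d) (s r c : ℝ) (x : E d) :
    hess (fun y => c * Real.exp (r * (y k + s))) x
      = (c * r ^ 2 * Real.exp (r * (x k + s))) • Matrix.single k k 1 := by
  ext i j
  change D1 (fun y => D1 (fun y => c * Real.exp (r * (y k + s))) y j) x i = _
  simp only [D1_exp_coord]
  by_cases hjk : j = k
  · subst hjk
    simp only [Pi.single_eq_same, D1_exp_coord]
    by_cases hij : i = j
    · subst hij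
      simp [sq, mul_assoc]
    · simp [hij, Ne.symm hij]
  · simp [D1, hjk, Ne.symm hjk]

lemma abs_apply_le_vecNorm (p : Fin d → ℝ) (k : Fin d) : |p k| ≤ vecNorm p := by
  rw [vecNorm_eq_norm_toLp]
  exact PiLp.norm_apply_le (WithLp.toLp 2 p : E d) k

lemma exists_isBarrier (k : Fin d) {δ K₀ D : ℝ} (hδ : 0 < δ) (hK₀ : 0 ≤ K₀) {S : Set (E d)}
    {z : E d} (hS : ∀ x ∈ S, dist x z ≤ D) :
    ∃ Ψ, IsBarrier δ K₀ (Real.exp (2 * ((K₀ + 1) / δ) * D) / ((K₀ + 1) / δ)) S Ψ := by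
  set r := (K₀ + 1) / δ
  have hr_pos : 0 < r := by positivity
  have hcoord : ∀ x ∈ S, |x k - z k| ≤ D := fun x hx =>
    (PiLp.norm_apply_le (x - z) k).trans (dist_eq_norm x z ▸ hS x hx)
  refine ⟨fun x => r⁻¹ * Real.exp (r * (x k + (D - z k))), by fun_prop, fun x _ => by positivity,
    fun x hx => ?_, fun x _ => ?_, fun x hx m p hm hp => ?_⟩
  · rw [← div_eq_inv_mul]
    refine div_le_div_of_nonneg_right (Real.exp_le_exp.2 ?_) hr_pos.le
    nlinarith [(abs_le.1 (hcoord x hx)).2]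
  · rw [hess_exp_coord, ← Matrix.diagonal_single, ← Matrix.diagonal_smul,
      Matrix.nonneg_iff_posSemidef, Matrix.posSemidef_diagonal_iff]
    have hsingle : 0 ≤ Pi.single (M := fun _ => ℝ) k 1 := Pi.single_nonneg.2 zero_le_one
    exact smul_nonneg (by positivity) hsingle
  · have hexp : 1 ≤ Real.exp (r * (x k + (D - z k))) :=
      Real.one_le_exp (mul_nonneg hr_pos.le (by linarith [(abs_le.1 (hcoord x hx)).1]))
    have hcoeff : 1 ≤ r * m k k + p k := by
      have : r * δ = K₀ + 1 := div_mul_cancel₀ _ hδ.ne'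
      nlinarith [hm.le_diag k, (abs_le.1 ((abs_apply_le_vecNorm p k).trans hp)).1]
    calc 1 ≤ (r * m k k + p k) * Real.exp (r * (x k + (D - z k))) := by nlinarith
      _ = _ := by
        rw [hess_exp_coord, D1_exp_coord]
        simp only [Matrix.mul_smul, Matrix.trace_smul, Matrix.trace_mul_single, Matrix.of_apply,
          dotProduct_single, smul_eq_mul, op_smul_eq_mul, mul_one]
        field_simp

end Barrier

section DoubledMaximum

variable {d : ℕ}

lemma DoublingIneq.trace_mul_sub_trace_mul_le_of_memSdelta {δ κ μ H ν : ℝ}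
    {X Y : Matrix (Fin d) (Fin d) ℝ} {m n : Fin d → Fin d → ℝ}
    (h : DoublingIneq κ (X - (2 * μ) • 1) Y) (hX : X.IsSymm) (hY : Y.IsSymm) (hδ : 0 < δ)
    (hκ : 0 < κ) (hμ : 0 ≤ μ) (hH : 0 ≤ H) (hm : memSdelta δ m) (hn : memSdelta δ n)
    (hYH : (Matrix.of n * Y).trace ≤ H) (hmn : matNorm (m - n) ≤ ν) :
    (Matrix.of m * X).trace - (Matrix.of n * Y).trace
      ≤ (δ⁻¹ * (H + 2 * κ * (d * δ⁻¹)) + 2 * κ) / (4 * δ) * ν ^ 2 + 2 * μ * (d * δ⁻¹) := by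
  have hY_le : Y ≤ (δ⁻¹ * (H + 2 * κ * (d * δ⁻¹))) • 1 :=
    le_smul_one_of_trace_mul_le hδ hn.smul_one_le hn.trace_le (by positivity)
      (h.neg_smul_one_le hY) hYH
  have htrace := h.trace_mul_sub_trace_mul_le (hX.sub (isSymm_smul_one _)) hY hY_le
    (by positivity) hδ hm.smul_one_le hn.isSymm
  have hdiff : ((Matrix.of m - Matrix.of n) * (Matrix.of m - Matrix.of n)).trace ≤ ν ^ 2 := by
    rw [Matrix.of_sub_of, ← matNorm_sq_eq_trace (m := m - n) (hm.isSymm.sub hn.isSymm)]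
    exact pow_le_pow_left₀ (Real.sqrt_nonneg _) hmn 2
  have hshift : (Matrix.of m * (X - (2 * μ) • 1)).trace
      = (Matrix.of m * X).trace - 2 * μ * (Matrix.of m).trace := by
    rw [mul_sub, Matrix.trace_sub, Matrix.mul_smul, mul_one, Matrix.trace_smul, smul_eq_mul]
  rw [hshift] at htrace
  have hmain := htrace.trans (mul_le_mul_of_nonneg_left hdiff (by positivity))
  linarith [mul_le_mul_of_nonneg_left hm.trace_le (by positivity : 0 ≤ 2 * μ)]

lemma dotProduct_add_smul_sub_dotProduct_le {p q ξ ζ : Fin d → ℝ} {μ K₀ M ν : ℝ} (hμ : 0 ≤ μ)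
    (hp : vecNorm p ≤ K₀) (hpq : vecNorm (p - q) ≤ ν) (hξ : vecNorm ξ ≤ M)
    (hζ : vecNorm ζ ≤ 1) : p ⬝ᵥ (ξ + (2 * μ) • ζ) - q ⬝ᵥ ξ ≤ ν * M + 2 * μ * K₀ := by
  have hdot : ∀ {v w : Fin d → ℝ} {s t : ℝ}, vecNorm v ≤ s → vecNorm w ≤ t → v ⬝ᵥ w ≤ s * t :=
    fun hv hw => (le_abs_self _).trans <| (abs_dotProduct_le_vecNorm_mul_vecNorm _ _).trans <|
      mul_le_mul hv hw (vecNorm_nonneg _) ((vecNorm_nonneg _).trans hv)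
  calc p ⬝ᵥ (ξ + (2 * μ) • ζ) - q ⬝ᵥ ξ = (p - q) ⬝ᵥ ξ + 2 * μ * (p ⬝ᵥ ζ) := by
        rw [dotProduct_add, dotProduct_smul, sub_dotProduct, smul_eq_mul]
        ring
    _ ≤ ν * M + 2 * μ * (K₀ * 1) := by
        gcongr
        exacts [hdot hpq hξ, hdot hp hζ]
    _ = ν * M + 2 * μ * K₀ := by rw [mul_one]

lemma mul_sub_mul_le_two_mul {s s' r r' K₀ M W : ℝ} (hs : 0 ≤ s) (hsK : s ≤ K₀)
    (hs' : |s - s'| ≤ K₀ * W) (hr' : |r'| ≤ M) (hW : 0 ≤ W) (hrr' : -(M * W) ≤ r - r') :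
    s' * r' - s * r ≤ 2 * (K₀ * M * W) := by
  have hM : 0 ≤ M := (abs_nonneg _).trans hr'
  have hvalue : s * (r' - r) ≤ K₀ * (M * W) :=
    (mul_le_mul_of_nonneg_left (by linarith) hs).trans
      (mul_le_mul_of_nonneg_right hsK (mul_nonneg hM hW))
  have hcoeff : (s' - s) * r' ≤ K₀ * W * M := by
    refine (le_abs_self _).trans ?_
    rw [abs_mul, abs_sub_comm]
    exact mul_le_mul hs' hr' (abs_nonneg _) ((abs_nonneg _).trans hs')
  linarith

/-- The bound for `L^{αβ}(u + εΨ)(x) + f^{αβ}(x) - L^{αβ}v(y) - f^{αβ}(y)` at a pair `(x, y)` of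
points with `|x - y| ≤ r` and `ω(|x - y|) ≤ W` obtained by doubling the variables; its three
summands come from the oscillation of `a`, from the localizing penalty `μ|x - x₀|²`, and from the
oscillation of `b`, `c`, `f`. -/
def doublingError (d : ℕ) (δ K₀ γ κ μ M r W : ℝ) : ℝ :=
  (δ⁻¹ * (1 + 3 * K₀ * M + 2 * κ * (d * δ⁻¹)) + 2 * κ) / (4 * δ) * (K₀ * r ^ γ) ^ 2
    + 2 * μ * (d * δ⁻¹ + K₀) + 4 * (K₀ * M * W)

namespace CoeffBounds

variable {A B : Type} {δ K₀ γ : ℝ} {ω : ℝ → ℝ} {a : A → B → E d → Fin d → Fin d → ℝ}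
  {b : A → B → E d → Fin d → ℝ} {c f : A → B → E d → ℝ} {α : A} {β : B} {κ μ M r W : ℝ}

lemma const_nonneg (h : CoeffBounds δ K₀ γ ω a b c f) (α : A) (β : B) (x : E d) : 0 ≤ K₀ :=
  (vecNorm_nonneg _).trans (h.vecNorm_le α β x)

lemma trace_mul_hess_le (h : CoeffBounds δ K₀ γ ω a b c f) {v : E d → ℝ} {y : E d}
    (hv : (hess v y).IsSymm) (hM : 1 ≤ M) (hDv : vecNorm (D1 v y) ≤ M) (hvM : |v y| ≤ M)
    (hL : Lop a b c α β v y + f α β y ≤ 1) :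
    (Matrix.of (a α β y) * hess v y).trace ≤ 1 + 3 * K₀ * M := by
  have hK₀ := h.const_nonneg α β y
  have hfirst : |b α β y ⬝ᵥ D1 v y| ≤ K₀ * M :=
    (abs_dotProduct_le_vecNorm_mul_vecNorm _ _).trans
      (mul_le_mul (h.vecNorm_le α β y) hDv (vecNorm_nonneg _) hK₀)
  have hzeroth : |c α β y * v y| ≤ K₀ * M := by
    rw [abs_mul, abs_of_nonneg (h.nonneg α β y)]
    exact mul_le_mul (h.le α β y) hvM (abs_nonneg _) hK₀
  have hsource : |f α β y| ≤ K₀ * M :=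
    (h.abs_source_le α β y).trans (le_mul_of_one_le_right hK₀ hM)
  rw [Lop_eq α β hv] at hL
  linarith [(abs_le.1 hfirst).1, (abs_le.1 hzeroth).2, (abs_le.1 hsource).1]

lemma Lop_add_sub_Lop_add_le (h : CoeffBounds δ K₀ γ ω a b c f) {w v : E d → ℝ} {x₀ x y : E d}
    {M' z : ℝ} (hmax : IsDoubledMax κ μ r M' w v x₀ x y) (hw : ContDiffAt ℝ 2 w x)
    (hv : ContDiffAt ℝ 2 v y) (hδ : 0 < δ) (hγ : 0 ≤ γ) (hκ : 0 < κ) (hμ : 0 ≤ μ) (hM : 1 ≤ M)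
    (hx : ‖x - x₀‖ ≤ 1) (hW : 0 ≤ W) (hω : ω ‖x - y‖ ≤ W) (hDv : vecNorm (D1 v y) ≤ M)
    (hvM : |v y| ≤ M) (hz : -(M * W) ≤ z - v y) (hL : Lop a b c α β v y + f α β y ≤ 1) :
    (Matrix.of (a α β x) * hess w x).trace + b α β x ⬝ᵥ D1 w x - c α β x * z + f α β x
      - (Lop a b c α β v y + f α β y) ≤ doublingError d δ K₀ γ κ μ M r W := by
  have hK₀ := h.const_nonneg α β y
  have hKω : K₀ * ω ‖x - y‖ ≤ K₀ * W := mul_le_mul_of_nonneg_left hω hK₀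
  have ha : matNorm (a α β x - a α β y) ≤ K₀ * r ^ γ := by
    refine (h.matNorm_sub_le α β x y).trans ?_
    gcongr
    exact hmax.norm_sub_le
  have hsecond := hmax.doublingIneq.trace_mul_sub_trace_mul_le_of_memSdelta (isSymm_hess hw)
    (isSymm_hess hv) hδ hκ hμ (by positivity) (h.memSdelta α β x) (h.memSdelta α β y)
    (h.trace_mul_hess_le (isSymm_hess hv) hM hDv hvM hL) ha
  have hfirst := dotProduct_add_smul_sub_dotProduct_le hμ (h.vecNorm_le α β x)
    ((h.vecNorm_sub_le α β x y).trans hKω) hDv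
    ((vecNorm_eq_norm_toLp ⇑(x - x₀)).trans_le hx)
  have hzeroth := mul_sub_mul_le_two_mul (h.nonneg α β x) (h.le α β x)
    ((h.abs_sub_le α β x y).trans hKω) hvM hW hz
  have hsource : f α β x - f α β y ≤ K₀ * M * W := by
    refine ((le_abs_self _).trans ((h.abs_source_sub_le α β x y).trans hKω)).trans ?_
    exact mul_le_mul_of_nonneg_right (le_mul_of_one_le_right hK₀ hM) hW
  rw [hmax.D1_eq, Lop_eq α β (isSymm_hess hv), doublingError]
  linarith

lemma Lop_add_le_Lop_add_of_isBarrier (h : CoeffBounds δ K₀ γ ω a b c f) {C ε : ℝ}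
    {S : Set (E d)} {u Ψ : E d → ℝ} {x : E d} (hΨ : IsBarrier δ K₀ C S Ψ) (hx : x ∈ S)
    (hu : ContDiffAt ℝ 2 u x) (hε : 0 ≤ ε) :
    Lop a b c α β u x + ε ≤ (Matrix.of (a α β x) * hess (u + ε • Ψ) x).trace
      + b α β x ⬝ᵥ D1 (u + ε • Ψ) x - c α β x * u x := by
  have hΨ₂ : ContDiffAt ℝ 2 Ψ x := hΨ.contDiff.contDiffAt
  have hεΨ : ContDiffAt ℝ 2 (ε • Ψ) x := hΨ₂.const_smul ε
  rw [Lop_eq α β (isSymm_hess hu), hess_add hu hεΨ, hess_const_smul ε hΨ₂,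
    D1_add (hu.differentiableAt (by norm_num)) (hεΨ.differentiableAt (by norm_num)),
    D1_const_smul, mul_add, Matrix.trace_add, Matrix.mul_smul, Matrix.trace_smul, dotProduct_add,
    dotProduct_smul, smul_eq_mul, smul_eq_mul]
  linarith [mul_le_mul_of_nonneg_left
    (hΨ.one_le x hx _ _ (h.memSdelta α β x) (h.vecNorm_le α β x)) hε]

end CoeffBounds

lemma HasLinearGrowth.Pop_lt {Λ K₁ κ M K : ℝ}
    {P : (Fin d → Fin d → ℝ) → (Fin d → ℝ) → ℝ → ℝ} (hP : HasLinearGrowth Λ K₁ P) (hK₁ : 0 ≤ K₁)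
    {u : E d → ℝ} {x : E d} (hu : (hess u x).IsSymm) (hκ : 0 ≤ κ) (hhess : hess u x ≤ κ • 1)
    (hDu : vecNorm (D1 u x) ≤ M) (huM : |u x| ≤ M) (hK : Λ * κ + K₁ * M + K₁ * M < K) :
    Pop P u x < K := by
  refine (hP (hess u x) (D1 u x) (u x) κ hu hκ hhess).trans_lt (lt_of_le_of_lt ?_ hK)
  gcongr

lemma IsDoubledMax.hess_le_smul_one {δ K₀ κ μ r M C ε : ℝ} {S : Set (E d)} {u Ψ v : E d → ℝ}
    {x₀ x y : E d} (hmax : IsDoubledMax κ μ r M (u + ε • Ψ) v x₀ x y)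
    (hΨ : IsBarrier δ K₀ C S Ψ) (hx : x ∈ S) (hu : ContDiffAt ℝ 2 u x) (hε : 0 ≤ ε) :
    hess u x ≤ (2 * κ + 2 * μ) • 1 := by
  have hΨ₂ : ContDiffAt ℝ 2 Ψ x := hΨ.contDiff.contDiffAt
  have hεΨ : ContDiffAt ℝ 2 (ε • Ψ) x := hΨ₂.const_smul ε
  have hw : ContDiffAt ℝ 2 (u + ε • Ψ) x := hu.add hεΨ
  have hw_le := hmax.doublingIneq.le_smul_one ((isSymm_hess hw).sub (isSymm_smul_one _))
  calc hess u x ≤ hess (u + ε • Ψ) x := by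
        rw [hess_add hu hεΨ, hess_const_smul ε hΨ₂]
        exact le_add_of_nonneg_right (smul_nonneg hε (hΨ.hess_nonneg x hx))
    _ ≤ (2 * κ) • 1 + (2 * μ) • 1 := sub_le_iff_le_add.1 hw_le
    _ = (2 * κ + 2 * μ) • 1 := (add_smul _ _ _).symm

end DoubledMaximum

section Comparison

variable {d : ℕ}

lemma HolderBound.vecNorm_D1_le {χ M : ℝ} {G : Set (E d)} {u : E d → ℝ} {x : E d}
    (h : HolderBound χ G u M) (hG : IsOpen G) (hM : 0 ≤ M) (hx : x ∈ G) :
    vecNorm (D1 u x) ≤ M := by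
  refine (vecNorm_clm_apply_single _).trans_le (norm_fderiv_le_of_lip' ℝ hM ?_)
  filter_upwards [hG.mem_nhds hx] with y hy using h.2.2.1 y hy x hx

lemma HolderBound.norm_fderiv_sub_le {χ M : ℝ} {G : Set (E d)} {u : E d → ℝ} {x y : E d}
    (h : HolderBound χ G u M) (hx : x ∈ G) (hy : y ∈ G) :
    ‖fderiv ℝ u x - fderiv ℝ u y‖ ≤ M * ‖x - y‖ ^ χ :=
  (vecNorm_clm_apply_single _).symm.trans_le (h.2.2.2 x hx y hy)

lemma HolderBound.abs_sub_le_of_mem_closure {χ M : ℝ} {G : Set (E d)} {u : E d → ℝ} {x y : E d}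
    (h : HolderBound χ G u M) (hu : ContinuousOn u (closure G)) (hx : x ∈ G)
    (hy : y ∈ closure G) : |u x - u y| ≤ M * ‖x - y‖ :=
  ContinuousWithinAt.closure_le hy
    (continuousWithinAt_const.sub ((hu y hy).mono subset_closure)).abs
    (Continuous.continuousWithinAt (by fun_prop)) (h.2.2.1 x hx)

/-- `u` and `v` are a sub- and a supersolution of the truncated equations
`max(F[u], P[u] - K) ≥ 0 ≥ min(F[v], -P[-v] + K)` in `G`, ordered on `∂G`, with
`C^{1+χ}(G)`-norms at most `M`. -/
structure IsComparisonPair {A B : Type} (a : A → B → E d → Fin d → Fin d → ℝ)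
    (b : A → B → E d → Fin d → ℝ) (c f : A → B → E d → ℝ)
    (P : (Fin d → Fin d → ℝ) → (Fin d → ℝ) → ℝ → ℝ) (χ K M : ℝ) (G : Set (E d))
    (u v : E d → ℝ) : Prop where
  continuousOn_left : ContinuousOn u (closure G)
  continuousOn_right : ContinuousOn v (closure G)
  contDiffAt_left : ∀ x ∈ G, ContDiffAt ℝ 2 u x
  contDiffAt_right : ∀ x ∈ G, ContDiffAt ℝ 2 v x
  subsolution : ∀ x ∈ G, 0 ≤ max (Fop a b c f u x) (Pop P u x - K)
  supersolution : ∀ x ∈ G, min (Fop a b c f v x) (-(Pop P (fun y => -(v y)) x) + K) ≤ 0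
  le_of_mem_frontier : ∀ x ∈ frontier G, u x ≤ v x
  holderBound_left : HolderBound χ G u M
  holderBound_right : HolderBound χ G v M

/-- The smallness conditions relating the penalties `κ`, `μ`, the localization radius `ρ`, the
distance `t` of the doubled points and the size `ε` of the barrier. -/
structure DoublingScales (d : ℕ) (δ K₀ χ γ Λ K₁ : ℝ) (ω : ℝ → ℝ) (K M κ μ ρ t ε : ℝ) : Prop where
  penalty_pos : 0 < κ
  localization_pos : 0 < μ
  radius_pos : 0 < ρ
  radius_le_one : ρ ≤ 1
  growth_lt : Λ * (2 * κ + 2 * μ) + K₁ * M + K₁ * M < K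
  sq_le : (M * ρ ^ χ) ^ 2 ≤ κ * μ * ρ ^ 2
  two_mul_lt : 2 * (M * ρ ^ χ) < κ * ρ
  radius_le_barrier : 2 * M * ρ ≤ ε
  dist_le : M * ρ ^ χ / κ ≤ t
  le_modulus : t ≤ ω t
  error_lt : doublingError d δ K₀ γ κ μ M (M * ρ ^ χ / κ) (ω t) < ε

namespace IsComparisonPair

variable {A B : Type} {δ K₀ χ γ Λ K₁ K M κ μ ρ t ε C : ℝ} {ω : ℝ → ℝ}
  {a : A → B → E d → Fin d → Fin d → ℝ} {b : A → B → E d → Fin d → ℝ} {c f : A → B → E d → ℝ}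
  {P : (Fin d → Fin d → ℝ) → (Fin d → ℝ) → ℝ → ℝ} {G : Set (E d)} {u v Ψ : E d → ℝ}
  {x₀ x y : E d}

-- The Lipschitz bounds keep the zeros of `u - v` on `∂G` away from `x₀`.
lemma closedBall_subset (h : IsComparisonPair a b c f P χ K M G u v) (hG : IsOpen G)
    (hM : 0 ≤ M) (hρ : 0 ≤ ρ) (hρε : 2 * M * ρ ≤ ε) (hx₀ : x₀ ∈ G) (hε : ε < u x₀ - v x₀) :
    Metric.closedBall x₀ ρ ⊆ G := by
  refine (convex_closedBall x₀ ρ).isPreconnected.subset_of_closure_inter_subset hG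
    ⟨x₀, Metric.mem_closedBall_self hρ, hx₀⟩ ?_
  rintro y ⟨hy, hy_ball⟩
  by_contra hyG
  have hy_le : u y ≤ v y := h.le_of_mem_frontier y (hG.frontier_eq ▸ ⟨hy, hyG⟩)
  have hdist : M * ‖x₀ - y‖ ≤ M * ρ := by
    rw [← dist_eq_norm']
    gcongr
    exact hy_ball
  have hlip_u := h.holderBound_left.abs_sub_le_of_mem_closure h.continuousOn_left hx₀ hy
  have hlip_v := h.holderBound_right.abs_sub_le_of_mem_closure h.continuousOn_right hx₀ hy
  linarith [(abs_le.1 hlip_u).2, (abs_le.1 hlip_v).1]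

lemma exists_isDoubledMax (h : IsComparisonPair a b c f P χ K M G u v)
    (hs : DoublingScales d δ K₀ χ γ Λ K₁ ω K M κ μ ρ t ε) (hM : 0 ≤ M) (hχ : 0 ≤ χ)
    (hΨ : ContDiff ℝ 2 Ψ) (hball : Metric.closedBall x₀ ρ ⊆ G)
    (hmax : ∀ x ∈ G, (u + ε • Ψ) x - v x ≤ (u + ε • Ψ) x₀ - v x₀) :
    ∃ x ∈ Metric.ball x₀ ρ, ∃ y ∈ Metric.ball x₀ ρ,
      IsDoubledMax κ μ (M * ρ ^ χ / κ) ‖fderiv ℝ v x₀‖ (u + ε • Ψ) v x₀ x y := by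
  have hw : ∀ x ∈ Metric.closedBall x₀ ρ, ContDiffAt ℝ 2 (u + ε • Ψ) x := fun x hx =>
    (h.contDiffAt_left x (hball hx)).add (hΨ.contDiffAt.const_smul ε)
  refine _root_.exists_isDoubledMax hs.radius_pos hs.penalty_pos hs.localization_pos hs.sq_le
    hs.two_mul_lt hw (fun x hx => h.contDiffAt_right x (hball hx)) (fun x hx => ?_)
    fun x hx => hmax x (hball hx)
  have hx₀ := hball (Metric.mem_closedBall_self hs.radius_pos.le)
  refine (h.holderBound_right.norm_fderiv_sub_le (hball hx) hx₀).trans ?_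
  gcongr
  exact mem_closedBall_iff_norm.1 hx

lemma Fop_nonneg_left (h : IsComparisonPair a b c f P χ K M G u v) (hG : IsOpen G)
    (hs : DoublingScales d δ K₀ χ γ Λ K₁ ω K M κ μ ρ t ε) (hP : HasLinearGrowth Λ K₁ P)
    (hK₁ : 0 ≤ K₁) (hM : 0 ≤ M) (hx : x ∈ G) (hhess : hess u x ≤ (2 * κ + 2 * μ) • 1) :
    0 ≤ Fop a b c f u x := by
  have hκμ : 0 ≤ 2 * κ + 2 * μ := by linarith [hs.penalty_pos, hs.localization_pos]
  have hPop := hP.Pop_lt hK₁ (isSymm_hess (h.contDiffAt_left x hx)) hκμ hhess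
    (h.holderBound_left.vecNorm_D1_le hG hM hx) (h.holderBound_left.2.1 x hx) hs.growth_lt
  exact (le_max_iff.1 (h.subsolution x hx)).resolve_right (not_le.2 (sub_neg.2 hPop))

lemma Fop_nonpos_right (h : IsComparisonPair a b c f P χ K M G u v) (hG : IsOpen G)
    (hs : DoublingScales d δ K₀ χ γ Λ K₁ ω K M κ μ ρ t ε) (hP : HasLinearGrowth Λ K₁ P)
    (hK₁ : 0 ≤ K₁) (hM : 0 ≤ M) (hy : y ∈ G) (hhess : -((2 * κ) • 1) ≤ hess v y) :
    Fop a b c f v y ≤ 0 := by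
  have hκμ : 0 ≤ 2 * κ + 2 * μ := by linarith [hs.penalty_pos, hs.localization_pos]
  have hhess' : hess (-v) y ≤ (2 * κ + 2 * μ) • 1 := by
    rw [hess_neg]
    exact (neg_le.1 hhess).trans (smul_one_le_smul_one (by linarith [hs.localization_pos]))
  have hDv : vecNorm (D1 (-v) y) ≤ M := by
    rw [D1_neg, vecNorm_neg]
    exact h.holderBound_right.vecNorm_D1_le hG hM hy
  have hvM : |(-v) y| ≤ M := (abs_neg (v y)).trans_le (h.holderBound_right.2.1 y hy)
  have hPop := hP.Pop_lt hK₁ (isSymm_hess (u := -v) (h.contDiffAt_right y hy).neg) hκμ hhess' hDv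
    hvM hs.growth_lt
  refine (min_le_iff.1 (h.supersolution y hy)).resolve_right (not_le.2 ?_)
  exact lt_neg_add_iff_add_lt.2 ((add_zero _).trans_lt hPop)

lemma neg_le_sub_of_isDoubledMax (h : IsComparisonPair a b c f P χ K M G u v)
    (hs : DoublingScales d δ K₀ χ γ Λ K₁ ω K M κ μ ρ t ε) (hM : 0 ≤ M) (hG : IsOpen G)
    (hε : 0 ≤ ε) (hΨ : IsBarrier δ K₀ C G Ψ) (hx₀ : x₀ ∈ G) (hx : x ∈ G)
    (hx₀ε : ε * C ≤ (u + ε • Ψ) x₀ - v x₀)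
    (hmax : IsDoubledMax κ μ (M * ρ ^ χ / κ) ‖fderiv ℝ v x₀‖ (u + ε • Ψ) v x₀ x y) :
    -(M * ω t) ≤ u x - v y := by
  have hDv : ‖fderiv ℝ v x₀‖ ≤ M :=
    (vecNorm_clm_apply_single _).symm.trans_le (h.holderBound_right.vecNorm_D1_le hG hM hx₀)
  have hloss : ‖fderiv ℝ v x₀‖ * ‖x - y‖ ≤ M * ω t :=
    mul_le_mul hDv (hmax.norm_sub_le.trans (hs.dist_le.trans hs.le_modulus)) (norm_nonneg _) hM
  have hΨx : ε * Ψ x ≤ ε * C := mul_le_mul_of_nonneg_left (hΨ.le x hx) hε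
  have hval : (u + ε • Ψ) x₀ - v x₀ - ‖fderiv ℝ v x₀‖ * ‖x - y‖ ≤ u x + ε * Ψ x - v y :=
    hmax.value_le
  linarith

-- The barrier makes `L(u + εΨ)(x)` exceed `Lv(y)` by more than doubling the variables permits.
lemma not_isDoubledMax [Nonempty A] [Nonempty B] (h : IsComparisonPair a b c f P χ K M G u v)
    (hC : CoeffBounds δ K₀ γ ω a b c f)
    (hs : DoublingScales d δ K₀ χ γ Λ K₁ ω K M κ μ ρ t ε) (hP : HasLinearGrowth Λ K₁ P)
    (hδ : 0 < δ) (hγ : 0 ≤ γ) (hK₁ : 0 ≤ K₁) (hM : 1 ≤ M) (hω : MonotoneOn ω (Ici 0))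
    (hG : IsOpen G) (hε : 0 ≤ ε) (hΨ : IsBarrier δ K₀ C G Ψ) (hx₀ : x₀ ∈ G) (hx : x ∈ G)
    (hy : y ∈ G) (hxx₀ : ‖x - x₀‖ ≤ 1) (hx₀ε : ε * C ≤ (u + ε • Ψ) x₀ - v x₀) :
    ¬ IsDoubledMax κ μ (M * ρ ^ χ / κ) ‖fderiv ℝ v x₀‖ (u + ε • Ψ) v x₀ x y := by
  intro hmax
  have hM₀ : 0 ≤ M := zero_le_one.trans hM
  have hu₂ := h.contDiffAt_left x hx
  have hv₂ := h.contDiffAt_right y hy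
  have hxy : ‖x - y‖ ≤ t := hmax.norm_sub_le.trans hs.dist_le
  have ht : 0 ≤ t := (norm_nonneg _).trans hxy
  have hFu := h.Fop_nonneg_left hG hs hP hK₁ hM₀ hx (hmax.hess_le_smul_one hΨ hx hu₂ hε)
  have hFv := h.Fop_nonpos_right hG hs hP hK₁ hM₀ hy
    (hmax.doublingIneq.neg_smul_one_le (isSymm_hess hv₂))
  obtain ⟨θ, hθ, hθ_lt⟩ := exists_between (lt_min one_pos (half_pos (sub_pos.2 hs.error_lt)))
  obtain ⟨hθ_one, hθ_gap⟩ := lt_min_iff.1 hθ_lt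
  obtain ⟨α, β, hLu, hLv⟩ := hC.exists_lt_Lop_and_Lop_lt hθ hFu hFv
  have hdoubling := hC.Lop_add_sub_Lop_add_le (α := α) (β := β) hmax
    (hu₂.add (hΨ.contDiff.contDiffAt.const_smul ε)) hv₂ hδ hγ hs.penalty_pos
    hs.localization_pos.le hM hxx₀ (ht.trans hs.le_modulus) (hω (norm_nonneg _) ht hxy)
    (h.holderBound_right.vecNorm_D1_le hG hM₀ hy) (h.holderBound_right.2.1 y hy)
    (h.neg_le_sub_of_isDoubledMax hs hM₀ hG hε hΨ hx₀ hx hx₀ε hmax) (hLv.trans hθ_one).le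
  have hbarrier := hC.Lop_add_le_Lop_add_of_isBarrier (α := α) (β := β) hΨ hx hu₂ hε
  linarith

lemma sub_le_of_isBarrier [Nonempty A] [Nonempty B] (h : IsComparisonPair a b c f P χ K M G u v)
    (hC : CoeffBounds δ K₀ γ ω a b c f)
    (hs : DoublingScales d δ K₀ χ γ Λ K₁ ω K M κ μ ρ t ε) (hP : HasLinearGrowth Λ K₁ P)
    (hδ : 0 < δ) (hχ : 0 ≤ χ) (hγ : 0 ≤ γ) (hK₁ : 0 ≤ K₁) (hM : 1 ≤ M)
    (hω : MonotoneOn ω (Ici 0)) (hG : IsOpen G) (hGb : Bornology.IsBounded G)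
    (hΨ : IsBarrier δ K₀ C (closure G) Ψ) : ∀ x ∈ G, u x - v x ≤ ε * (1 + C) := by
  by_contra! ⟨x₁, hx₁, hx₁_lt⟩
  have hM₀ : 0 ≤ M := zero_le_one.trans hM
  have hε : 0 ≤ ε :=
    (mul_nonneg (by positivity) hs.radius_pos.le).trans hs.radius_le_barrier
  obtain ⟨x₀, hx₀, hx₀_max⟩ := hGb.isCompact_closure.exists_isMaxOn ⟨x₁, subset_closure hx₁⟩
    (((h.continuousOn_left.add (hΨ.contDiff.continuous.const_smul ε).continuousOn).sub
      h.continuousOn_right : ContinuousOn (fun x => (u + ε • Ψ) x - v x) (closure G)))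
  have hlarge : ε * (1 + C) < (u + ε • Ψ) x₀ - v x₀ := by
    refine lt_of_lt_of_le ?_ (hx₀_max (subset_closure hx₁))
    have : 0 ≤ ε * Ψ x₁ := mul_nonneg hε (hΨ.nonneg x₁ (subset_closure hx₁))
    change _ < u x₁ + ε * Ψ x₁ - v x₁
    linarith
  have hgap : ε < u x₀ - v x₀ := by
    have : ε * Ψ x₀ ≤ ε * C := mul_le_mul_of_nonneg_left (hΨ.le x₀ hx₀) hε
    change _ < u x₀ + ε * Ψ x₀ - v x₀ at hlarge
    linarith
  have hx₀G : x₀ ∈ G := by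
    by_contra hx₀G
    linarith [h.le_of_mem_frontier x₀ (hG.frontier_eq ▸ ⟨hx₀, hx₀G⟩)]
  have hball := h.closedBall_subset hG hM₀ hs.radius_pos.le hs.radius_le_barrier hx₀G hgap
  obtain ⟨x, hx, y, hy, hmax⟩ := h.exists_isDoubledMax hs hM₀ hχ hΨ.contDiff hball
    fun x hx => hx₀_max (subset_closure hx)
  exact h.not_isDoubledMax hC hs hP hδ hγ hK₁ hM hω hG hε (hΨ.mono subset_closure) hx₀G
    (hball (Metric.ball_subset_closedBall hx)) (hball (Metric.ball_subset_closedBall hy))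
    ((mem_ball_iff_norm.1 hx).le.trans hs.radius_le_one) (by linarith) hmax

end IsComparisonPair

end Comparison

section Exponents

/-- Exponents for which `κ ~ K`, `μ = K ^ (-χ / 4)` and `ρ = K ^ (-q)` are admissible scales in the
doubling argument as long as `M ≤ K ^ η`; every inequality has the margin `η` to absorb
constants. -/
structure AdmissibleExponents (χ γ τ q η : ℝ) : Prop where
  radius_pos : 0 < q
  pos : 0 < η
  lt_one : η < 1
  sq_le : 2 * (η - q * χ) ≤ (1 - χ / 4 - 2 * q) - η
  two_mul_le : η - q * χ ≤ (1 - q) - η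
  radius_le : η - q ≤ -(χ / 4) - η
  dist_le : η - q * χ ≤ -(η / τ) - η
  error_le : 1 + 2 * γ * (η - q * χ - 1) ≤ -(χ / 4) - η

-- `(4 - χ) / (8 - 7χ)` leaves room in both constraints on `q` exactly for the given `γ`.
lemma exists_radius_exponent {χ γ : ℝ} (hχ₀ : 0 < χ) (hχ₁ : χ < 1)
    (hγ : γ = (4 - 3 * χ) / (8 - 4 * χ)) :
    ∃ q : ℝ, 1 / 2 ≤ q ∧ 0 < 1 - χ / 4 - 2 * q + 2 * (q * χ) ∧
      0 < 2 * γ * (q * χ) - (1 - 2 * γ) - χ / 4 := by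
  have hq_den : 0 < 8 - 7 * χ := by linarith
  have hγ_den : 0 < 8 - 4 * χ := by linarith
  have hγ_mul : γ * (8 - 4 * χ) = 4 - 3 * χ := hγ ▸ div_mul_cancel₀ _ hγ_den.ne'
  obtain ⟨q, hq⟩ : ∃ q : ℝ, q * (8 - 7 * χ) = 4 - χ := ⟨_, div_mul_cancel₀ _ hq_den.ne'⟩
  refine ⟨q, by nlinarith, ?_, ?_⟩
  · have hmargin : 1 - χ / 4 - 2 * q + 2 * (q * χ) = (4 - χ) * χ / (4 * (8 - 7 * χ)) := by
      rw [eq_div_iff (by positivity)]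
      linear_combination (8 * (χ - 1)) * hq
    rw [hmargin]
    have : 0 < 4 - χ := by linarith
    positivity
  · have hmargin : 2 * γ * (q * χ) - (1 - 2 * γ) - χ / 4 =
        χ * χ * (4 - χ) / ((8 - 7 * χ) * (8 - 4 * χ)) := by
      rw [eq_div_iff (by positivity)]
      linear_combination (2 * χ * q * (8 - 7 * χ) + 2 * (8 - 7 * χ)) * hγ_mul
        + (2 * χ * (4 - 3 * χ)) * hq
    rw [hmargin]
    have : 0 < 4 - χ := by linarith
    positivity

lemma exists_admissibleExponents {χ γ : ℝ} (τ : ℝ) (hχ₀ : 0 < χ) (hχ₁ : χ < 1)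
    (hγ : γ = (4 - 3 * χ) / (8 - 4 * χ)) : ∃ q η : ℝ, AdmissibleExponents χ γ τ q η := by
  obtain ⟨q, hq, hsq, herror⟩ := exists_radius_exponent hχ₀ hχ₁ hγ
  have hqχ : 0 < q * χ := by positivity
  have near_zero {φ ψ : ℝ → ℝ} (hφ : Continuous φ) (hψ : Continuous ψ) (h : φ 0 < ψ 0) :
      ∀ᶠ η in 𝓝[>] (0 : ℝ), φ η < ψ η :=
    (hφ.continuousAt.eventually_lt hψ.continuousAt h).filter_mono nhdsWithin_le_nhds
  have h_ev : ∀ᶠ η in 𝓝[>] (0 : ℝ), AdmissibleExponents χ γ τ q η := by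
    filter_upwards [self_mem_nhdsWithin,
      near_zero (φ := fun η => η) (ψ := fun _ => 1) (by fun_prop) (by fun_prop) one_pos,
      near_zero (φ := fun η => 2 * (η - q * χ)) (ψ := fun η => (1 - χ / 4 - 2 * q) - η)
        (by fun_prop) (by fun_prop) (by linarith),
      near_zero (φ := fun η => η - q * χ) (ψ := fun η => (1 - q) - η)
        (by fun_prop) (by fun_prop) (by linarith),
      near_zero (φ := fun η => η - q) (ψ := fun η => -(χ / 4) - η)
        (by fun_prop) (by fun_prop) (by linarith),
      near_zero (φ := fun η => η - q * χ) (ψ := fun η => -(η / τ) - η)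
        (by fun_prop) (by fun_prop) (by simpa using hqχ),
      near_zero (φ := fun η => 1 + 2 * γ * (η - q * χ - 1)) (ψ := fun η => -(χ / 4) - η)
        (by fun_prop) (by fun_prop) (by linarith)]
      with η hη hlt_one hsq htwo hradius hdist herror
    exact ⟨by linarith, hη, hlt_one, hsq.le, htwo.le, hradius.le, hdist.le, herror.le⟩
  exact ⟨q, h_ev.exists⟩

end Exponents

section Scales

lemma rpow_le_mul_rpow_of_le_sub {K s c e₁ e₂ : ℝ} (hK : 1 ≤ K) (hs : K ^ (-s) ≤ c)
    (he : e₁ ≤ e₂ - s) : K ^ e₁ ≤ c * K ^ e₂ :=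
  calc K ^ e₁ ≤ K ^ (-s + e₂) := Real.rpow_le_rpow_of_exponent_le hK (by linarith)
    _ = K ^ (-s) * K ^ e₂ := Real.rpow_add (by linarith) _ _
    _ ≤ c * K ^ e₂ := by gcongr

lemma rpow_sq {K : ℝ} (hK : 0 ≤ K) (e : ℝ) : (K ^ e) ^ 2 = K ^ (2 * e) := by
  rw [← Real.rpow_mul_natCast hK, Nat.cast_ofNat, mul_comm]

lemma mul_rpow_rpow_le {K M q χ η : ℝ} (hK : 0 < K) (hM : M ≤ K ^ η) :
    M * (K ^ (-q)) ^ χ ≤ K ^ (η - q * χ) := by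
  rw [← Real.rpow_mul hK.le, neg_mul, sub_eq_add_neg, Real.rpow_add hK]
  gcongr

namespace AdmissibleExponents

variable {χ γ τ q η c K M : ℝ}

lemma sq_mul_rpow_le (h : AdmissibleExponents χ γ τ q η) (hc : 0 < c) (hK : 1 ≤ K)
    (hM : 0 ≤ M) (hMK : M ≤ K ^ η) (hKc : K ^ (-η) ≤ c / 4) :
    (M * (K ^ (-q)) ^ χ) ^ 2 ≤ c * K * K ^ (-(χ / 4)) * (K ^ (-q)) ^ 2 := by
  have hK₀ : 0 < K := by linarith
  calc (M * (K ^ (-q)) ^ χ) ^ 2 ≤ (K ^ (η - q * χ)) ^ 2 := by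
        gcongr
        exact mul_rpow_rpow_le hK₀ hMK
    _ = K ^ (2 * (η - q * χ)) := rpow_sq hK₀.le _
    _ ≤ c / 4 * K ^ (1 - χ / 4 - 2 * q) := rpow_le_mul_rpow_of_le_sub hK hKc h.sq_le
    _ ≤ c * K ^ (1 - χ / 4 - 2 * q) := by gcongr; linarith
    _ = c * K * K ^ (-(χ / 4)) * (K ^ (-q)) ^ 2 := by
      rw [rpow_sq hK₀.le, sub_eq_add_neg _ (2 * q), ← mul_neg, Real.rpow_add hK₀, sub_eq_add_neg,
        Real.rpow_add hK₀, Real.rpow_one]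
      ring

lemma two_mul_mul_rpow_lt (h : AdmissibleExponents χ γ τ q η) (hc : 0 < c) (hK : 1 ≤ K)
    (hMK : M ≤ K ^ η) (hKc : K ^ (-η) ≤ c / 4) :
    2 * (M * (K ^ (-q)) ^ χ) < c * K * K ^ (-q) := by
  have hK₀ : 0 < K := by linarith
  have hle := (mul_rpow_rpow_le hK₀ hMK).trans
    (rpow_le_mul_rpow_of_le_sub hK hKc h.two_mul_le)
  rw [sub_eq_add_neg, Real.rpow_add hK₀, Real.rpow_one] at hle
  have : 0 < c * K * K ^ (-q) := by positivity
  linarith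

lemma two_mul_mul_rpow_le (h : AdmissibleExponents χ γ τ q η) (hc : c ≤ 1) (hK : 1 ≤ K)
    (hMK : M ≤ K ^ η) (hKc : K ^ (-η) ≤ c / 4) :
    2 * M * K ^ (-q) ≤ K ^ (-(χ / 4)) := by
  have hK₀ : 0 < K := by linarith
  calc 2 * M * K ^ (-q) ≤ 2 * (K ^ η * K ^ (-q)) := by
        rw [mul_assoc]
        gcongr
    _ = 2 * K ^ (η - q) := by rw [← Real.rpow_add hK₀, sub_eq_add_neg]
    _ ≤ 2 * (c / 4 * K ^ (-(χ / 4))) := by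
      gcongr
      exact rpow_le_mul_rpow_of_le_sub hK hKc h.radius_le
    _ = c / 2 * K ^ (-(χ / 4)) := by ring
    _ ≤ K ^ (-(χ / 4)) := mul_le_of_le_one_left (by positivity) (by linarith)

lemma mul_rpow_div_le (h : AdmissibleExponents χ γ τ q η) (hτ : 0 ≤ τ) (hc : 0 < c)
    (hK : 1 ≤ K) (hM : 0 < M) (hMK : M ≤ K ^ η) (hKc : K ^ (-η) ≤ c / 4) :
    M * (K ^ (-q)) ^ χ / (c * K) ≤ M ^ (-(1 / τ)) * K⁻¹ := by
  have hK₀ : 0 < K := by linarith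
  have hMτ : K ^ (-(η / τ)) ≤ M ^ (-(1 / τ)) := by
    calc K ^ (-(η / τ)) = (K ^ η) ^ (-(1 / τ)) := by rw [← Real.rpow_mul hK₀.le]; ring_nf
      _ ≤ M ^ (-(1 / τ)) :=
        Real.rpow_le_rpow_of_nonpos hM hMK (neg_nonpos.2 (one_div_nonneg.2 hτ))
  rw [div_le_iff₀ (by positivity)]
  calc M * (K ^ (-q)) ^ χ ≤ K ^ (η - q * χ) := mul_rpow_rpow_le hK₀ hMK
    _ ≤ c / 4 * K ^ (-(η / τ)) := rpow_le_mul_rpow_of_le_sub hK hKc h.dist_le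
    _ ≤ c * M ^ (-(1 / τ)) := by gcongr; linarith
    _ = M ^ (-(1 / τ)) * K⁻¹ * (c * K) := by field_simp

lemma mul_sq_rpow_le (h : AdmissibleExponents χ γ τ q η) (hγ₀ : 0 ≤ γ) (hγ₁ : γ ≤ 1)
    (hc₀ : 0 < c) (hc₁ : c ≤ 1) (hK : 1 ≤ K) (hM : 0 ≤ M) (hMK : M ≤ K ^ η) :
    K * ((M * (K ^ (-q)) ^ χ / (c * K)) ^ γ) ^ 2 ≤ c⁻¹ ^ 2 * K ^ (-(χ / 4)) := by
  have hK₀ : 0 < K := by linarith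
  have hdist : M * (K ^ (-q)) ^ χ / (c * K) ≤ c⁻¹ * K ^ (η - q * χ - 1) :=
    calc M * (K ^ (-q)) ^ χ / (c * K) ≤ K ^ (η - q * χ) / (c * K) := by
          gcongr
          exact mul_rpow_rpow_le hK₀ hMK
      _ = c⁻¹ * K ^ (η - q * χ - 1) := by rw [Real.rpow_sub_one hK₀.ne']; field_simp
  have hcγ : c⁻¹ ^ γ ≤ c⁻¹ := Real.rpow_le_self_of_one_le ((one_le_inv₀ hc₀).2 hc₁) hγ₁
  calc K * ((M * (K ^ (-q)) ^ χ / (c * K)) ^ γ) ^ 2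
      ≤ K * ((c⁻¹ * K ^ (η - q * χ - 1)) ^ γ) ^ 2 := by gcongr
    _ = K * (c⁻¹ ^ γ * K ^ ((η - q * χ - 1) * γ)) ^ 2 := by
      rw [Real.mul_rpow (by positivity) (by positivity), ← Real.rpow_mul hK₀.le]
    _ ≤ K * (c⁻¹ * K ^ ((η - q * χ - 1) * γ)) ^ 2 := by gcongr
    _ = c⁻¹ ^ 2 * K ^ (1 + 2 * γ * (η - q * χ - 1)) := by
      rw [mul_pow, rpow_sq hK₀.le, Real.rpow_add hK₀, Real.rpow_one, mul_comm _ γ, ← mul_assoc 2]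
      ring
    _ ≤ c⁻¹ ^ 2 * K ^ (-(χ / 4)) := by
      gcongr
      linarith [h.error_le, h.pos]

end AdmissibleExponents

/-- The ratio `κ / K` of the doubling penalty to the cut-off level: small enough for the growth of
`P` to stay below `K`. -/
def penaltyRatio (Λ : ℝ) : ℝ := (8 * Λ + 1)⁻¹

lemma penaltyRatio_pos {Λ : ℝ} (hΛ : 0 ≤ Λ) : 0 < penaltyRatio Λ :=
  inv_pos.2 (by positivity)

lemma penaltyRatio_le_one {Λ : ℝ} (hΛ : 0 ≤ Λ) : penaltyRatio Λ ≤ 1 :=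
  inv_le_one_of_one_le₀ (by linarith)

lemma penaltyRatio_mul_le_one {Λ : ℝ} (hΛ : 0 ≤ Λ) : penaltyRatio Λ * (8 * Λ) ≤ 1 := by
  rw [penaltyRatio, inv_mul_le_one₀ (by positivity)]
  linarith

/-- The factor of `K * (K₀ * r ^ γ) ^ 2` in the bound for the leading term of `doublingError`. -/
def leadingConst (d : ℕ) (δ K₀ : ℝ) : ℝ := (δ⁻¹ * (1 + 3 * K₀ + 2 * (d * δ⁻¹)) + 2) / (4 * δ)

/-- The factor `C` in the bound `doublingError < C * (μ + M * ω t)` for the penalty `κ = c * K`. -/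
def errorConst (d : ℕ) (δ K₀ c : ℝ) : ℝ :=
  1 + leadingConst d δ K₀ * K₀ ^ 2 * c⁻¹ ^ 2 + 2 * (d * δ⁻¹ + K₀) + 4 * K₀

lemma leadingConst_nonneg {d : ℕ} {δ K₀ : ℝ} (hδ : 0 ≤ δ) (hK₀ : 0 ≤ K₀) :
    0 ≤ leadingConst d δ K₀ := by
  unfold leadingConst
  positivity

lemma one_le_errorConst {d : ℕ} {δ K₀ : ℝ} (c : ℝ) (hδ : 0 ≤ δ) (hK₀ : 0 ≤ K₀) :
    1 ≤ errorConst d δ K₀ c := by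
  have hlead : 0 ≤ leadingConst d δ K₀ * K₀ ^ 2 * c⁻¹ ^ 2 :=
    mul_nonneg (mul_nonneg (leadingConst_nonneg hδ hK₀) (sq_nonneg _)) (sq_nonneg _)
  have hdrift : 0 ≤ 2 * (d * δ⁻¹ + K₀) := by positivity
  unfold errorConst
  linarith

lemma leading_coeff_le {d : ℕ} {δ K₀ K M κ : ℝ} (hδ : 0 ≤ δ) (hK₀ : 0 ≤ K₀) (hK : 1 ≤ K)
    (hMK : M ≤ K) (hκK : κ ≤ K) :
    (δ⁻¹ * (1 + 3 * K₀ * M + 2 * κ * (d * δ⁻¹)) + 2 * κ) / (4 * δ) ≤ leadingConst d δ K₀ * K :=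
  calc (δ⁻¹ * (1 + 3 * K₀ * M + 2 * κ * (d * δ⁻¹)) + 2 * κ) / (4 * δ)
      ≤ (δ⁻¹ * (K + 3 * K₀ * K + 2 * K * (d * δ⁻¹)) + 2 * K) / (4 * δ) := by gcongr
    _ = leadingConst d δ K₀ * K := by unfold leadingConst; ring

lemma doublingError_lt {d : ℕ} {δ K₀ γ c K M κ μ r W : ℝ} (hδ : 0 ≤ δ) (hK₀ : 0 ≤ K₀)
    (hK : 1 ≤ K) (hM : 1 ≤ M) (hMK : M ≤ K) (hκK : κ ≤ K) (hμ : 0 < μ) (hW : 0 ≤ W)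
    (hr : K * (r ^ γ) ^ 2 ≤ c⁻¹ ^ 2 * μ) :
    doublingError d δ K₀ γ κ μ M r W < errorConst d δ K₀ c * (μ + M * W) := by
  have hlead_nonneg := leadingConst_nonneg (d := d) hδ hK₀
  have hlead :
      (δ⁻¹ * (1 + 3 * K₀ * M + 2 * κ * (d * δ⁻¹)) + 2 * κ) / (4 * δ) * (K₀ * r ^ γ) ^ 2 ≤
        leadingConst d δ K₀ * K₀ ^ 2 * c⁻¹ ^ 2 * μ :=
    calc _ ≤ leadingConst d δ K₀ * K * (K₀ * r ^ γ) ^ 2 := by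
          gcongr
          exact leading_coeff_le hδ hK₀ hK hMK hκK
      _ = leadingConst d δ K₀ * K₀ ^ 2 * (K * (r ^ γ) ^ 2) := by ring
      _ ≤ leadingConst d δ K₀ * K₀ ^ 2 * (c⁻¹ ^ 2 * μ) := by gcongr
      _ = leadingConst d δ K₀ * K₀ ^ 2 * c⁻¹ ^ 2 * μ := by ring
  have hcross : 0 ≤ (1 + leadingConst d δ K₀ * K₀ ^ 2 * c⁻¹ ^ 2 + 2 * (d * δ⁻¹ + K₀)) * (M * W) +
      4 * K₀ * μ := by positivity
  unfold doublingError errorConst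
  linarith

/-- The constant `N` of the comparison estimate. -/
def comparisonConst (d : ℕ) (δ K₀ Λ K₁ η D : ℝ) : ℝ :=
  1 + (penaltyRatio Λ / 4) ^ (-(1 / η)) + 8 * Λ + 8 * K₁ +
    errorConst d δ K₀ (penaltyRatio Λ) * (1 + Real.exp (2 * ((K₀ + 1) / δ) * D) / ((K₀ + 1) / δ))

section LargeK

variable {d : ℕ} {δ K₀ χ γ Λ K₁ τ q η D K M : ℝ}

lemma comparisonConst_lower_bounds (d : ℕ) (η D : ℝ) (hδ : 0 < δ) (hK₀ : 0 ≤ K₀) (hΛ : 0 ≤ Λ)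
    (hK₁ : 0 ≤ K₁) :
    1 ≤ comparisonConst d δ K₀ Λ K₁ η D ∧
      (penaltyRatio Λ / 4) ^ (-(1 / η)) ≤ comparisonConst d δ K₀ Λ K₁ η D ∧
      8 * Λ ≤ comparisonConst d δ K₀ Λ K₁ η D ∧ 8 * K₁ ≤ comparisonConst d δ K₀ Λ K₁ η D ∧
      errorConst d δ K₀ (penaltyRatio Λ) *
          (1 + Real.exp (2 * ((K₀ + 1) / δ) * D) / ((K₀ + 1) / δ)) ≤
        comparisonConst d δ K₀ Λ K₁ η D := by
  have hratio : 0 ≤ (penaltyRatio Λ / 4) ^ (-(1 / η)) :=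
    Real.rpow_nonneg (by linarith [penaltyRatio_pos hΛ]) _
  have herror : 0 ≤ errorConst d δ K₀ (penaltyRatio Λ) *
      (1 + Real.exp (2 * ((K₀ + 1) / δ) * D) / ((K₀ + 1) / δ)) :=
    mul_nonneg (zero_le_one.trans (one_le_errorConst _ hδ.le hK₀)) (by positivity)
  unfold comparisonConst
  refine ⟨?_, ?_, ?_, ?_, ?_⟩ <;> linarith

lemma le_rpow_of_rpow_one_div_le (hη : 0 < η) (hM : 0 ≤ M) (h : M ^ (1 / η) ≤ K) :
    M ≤ K ^ η := by
  rw [one_div] at h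
  exact (Real.rpow_inv_le_iff_of_pos hM ((Real.rpow_nonneg hM _).trans h) hη).1 h

lemma rpow_neg_le_of_rpow_neg_one_div_le {c : ℝ} (hη : 0 < η) (hc : 0 < c)
    (h : c ^ (-(1 / η)) ≤ K) : K ^ (-η) ≤ c :=
  calc K ^ (-η) ≤ (c ^ (-(1 / η))) ^ (-η) :=
        Real.rpow_le_rpow_of_nonpos (by positivity) h (by linarith)
    _ = c := by rw [← Real.rpow_mul hc.le, neg_mul_neg, one_div_mul_cancel hη.ne', Real.rpow_one]

lemma growth_lt_of_large {μ : ℝ} (hΛ : 0 ≤ Λ) (hμ : μ ≤ 1) (hK : 0 < K) (hΛK : 8 * Λ ≤ K)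
    (hK₁ : 8 * K₁ * M ≤ K) :
    Λ * (2 * (penaltyRatio Λ * K) + 2 * μ) + K₁ * M + K₁ * M < K := by
  have hpenalty : penaltyRatio Λ * (8 * Λ) * K ≤ K :=
    mul_le_of_le_one_left hK.le (penaltyRatio_mul_le_one hΛ)
  have hlocalization : Λ * μ ≤ Λ := mul_le_of_le_one_right hΛ hμ
  linarith

lemma le_modulus_of_le_one {ω : ℝ → ℝ} {t : ℝ} (hχ : χ ≤ 1)
    (hω : ∀ t ∈ Icc (0 : ℝ) 1, t ^ χ ≤ ω t) (ht₀ : 0 < t) (ht₁ : t ≤ 1) : t ≤ ω t :=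
  (Real.self_le_rpow_of_le_one ht₀.le ht₁ hχ).trans (hω t ⟨ht₀.le, ht₁⟩)

lemma doublingScales_of_large {ω : ℝ → ℝ} (h : AdmissibleExponents χ γ τ q η) (hδ : 0 < δ)
    (hK₀ : 0 ≤ K₀) (hχ₀ : 0 ≤ χ) (hχ₁ : χ ≤ 1) (hγ₀ : 0 ≤ γ) (hγ₁ : γ ≤ 1) (hΛ : 0 ≤ Λ)
    (hτ : 0 ≤ τ) (hω : ∀ t ∈ Icc (0 : ℝ) 1, t ^ χ ≤ ω t) (hK : 1 ≤ K) (hM : 1 ≤ M)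
    (hMK : M ≤ K ^ η) (hKΛ : K ^ (-η) ≤ penaltyRatio Λ / 4) (hΛK : 8 * Λ ≤ K)
    (hK₁ : 8 * K₁ * M ≤ K) :
    DoublingScales d δ K₀ χ γ Λ K₁ ω K M (penaltyRatio Λ * K) (K ^ (-(χ / 4))) (K ^ (-q))
      (M ^ (-(1 / τ)) * K⁻¹)
      (errorConst d δ K₀ (penaltyRatio Λ) *
        (K ^ (-(χ / 4)) + M * ω (M ^ (-(1 / τ)) * K⁻¹))) := by
  have hK_pos : 0 < K := by linarith
  have hM_pos : 0 < M := by linarith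
  have hc₀ := penaltyRatio_pos hΛ
  have hc₁ := penaltyRatio_le_one hΛ
  have hμ : 0 < K ^ (-(χ / 4)) := by positivity
  have ht₁ : M ^ (-(1 / τ)) * K⁻¹ ≤ 1 :=
    mul_le_one₀ (Real.rpow_le_one_of_one_le_of_nonpos hM (neg_nonpos.2 (one_div_nonneg.2 hτ)))
      (by positivity) (inv_le_one_of_one_le₀ hK)
  have htω := le_modulus_of_le_one hχ₁ hω (t := M ^ (-(1 / τ)) * K⁻¹) (by positivity) ht₁
  have hω_nonneg : 0 ≤ ω (M ^ (-(1 / τ)) * K⁻¹) := le_trans (by positivity) htω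
  refine ⟨by positivity, hμ, by positivity,
    Real.rpow_le_one_of_one_le_of_nonpos hK (by linarith [h.radius_pos]),
    growth_lt_of_large hΛ (Real.rpow_le_one_of_one_le_of_nonpos hK (by linarith)) hK_pos hΛK hK₁,
    h.sq_mul_rpow_le hc₀ hK hM_pos.le hMK hKΛ, h.two_mul_mul_rpow_lt hc₀ hK hMK hKΛ, ?_,
    h.mul_rpow_div_le hτ hc₀ hK hM_pos hMK hKΛ, htω, ?_⟩
  · refine (h.two_mul_mul_rpow_le hc₁ hK hMK hKΛ).trans ?_
    exact (le_add_of_nonneg_right (by positivity)).trans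
      (le_mul_of_one_le_left (by positivity) (one_le_errorConst _ hδ.le hK₀))
  · exact doublingError_lt hδ.le hK₀ hK hM
      (hMK.trans (Real.rpow_le_self_of_one_le hK h.lt_one.le))
      (mul_le_of_le_one_left hK_pos.le hc₁) hμ hω_nonneg
      (h.mul_sq_rpow_le hγ₀ hγ₁ hc₀ hc₁ hK hM_pos.le hMK)

lemma doublingScales_of_comparisonConst_mul_le {ω : ℝ → ℝ} (h : AdmissibleExponents χ γ τ q η)
    (hδ : 0 < δ) (hK₀ : 0 ≤ K₀) (hχ₀ : 0 ≤ χ) (hχ₁ : χ ≤ 1) (hγ₀ : 0 ≤ γ) (hγ₁ : γ ≤ 1)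
    (hΛ : 0 ≤ Λ) (hK₁ : 0 ≤ K₁) (hτ : 0 ≤ τ) (hω : ∀ t ∈ Icc (0 : ℝ) 1, t ^ χ ≤ ω t)
    (hM : 1 ≤ M) (hK : comparisonConst d δ K₀ Λ K₁ η D * M ^ (1 / η) ≤ K) :
    DoublingScales d δ K₀ χ γ Λ K₁ ω K M (penaltyRatio Λ * K) (K ^ (-(χ / 4))) (K ^ (-q))
      (M ^ (-(1 / τ)) * K⁻¹)
      (errorConst d δ K₀ (penaltyRatio Λ) *
        (K ^ (-(χ / 4)) + M * ω (M ^ (-(1 / τ)) * K⁻¹))) := by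
  obtain ⟨hone, hratio, hgrowth, hK₁N, -⟩ := comparisonConst_lower_bounds d η D hδ hK₀ hΛ hK₁
  set N := comparisonConst d δ K₀ Λ K₁ η D
  have hM_pos : 0 < M := by linarith
  have hM_le : M ≤ M ^ (1 / η) :=
    Real.self_le_rpow_of_one_le hM ((one_le_div₀ h.pos).2 h.lt_one.le)
  have hNM : N * M ≤ K := (mul_le_mul_of_nonneg_left hM_le (by linarith)).trans hK
  have hNK : N ≤ K := (le_mul_of_one_le_right (by linarith) hM).trans hNM
  have hMK : M ≤ K ^ η := le_rpow_of_rpow_one_div_le h.pos hM_pos.le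
    ((le_mul_of_one_le_left (by positivity) hone).trans hK)
  have hKΛ : K ^ (-η) ≤ penaltyRatio Λ / 4 :=
    rpow_neg_le_of_rpow_neg_one_div_le h.pos (by linarith [penaltyRatio_pos hΛ])
      (hratio.trans hNK)
  exact doublingScales_of_large h hδ hK₀ hχ₀ hχ₁ hγ₀ hγ₁ hΛ hτ hω (hone.trans hNK) hM hMK hKΛ
    (hgrowth.trans hNK) ((mul_le_mul_of_nonneg_right hK₁N hM_pos.le).trans hNM)

end LargeK

end Scales

theorem statement12_general {d : ℕ} (hd : 1 ≤ d) {δ K₀ χ γ Λ K₁ τ : ℝ} (hδ : 0 < δ)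
    (hK₀ : 0 ≤ K₀) (hχ₀ : 0 < χ) (hχ₁ : χ < 1) (hγ : γ = (4 - 3 * χ) / (8 - 4 * χ))
    (hΛ : 0 ≤ Λ) (hK₁ : 0 ≤ K₁) (hτ : 0 < τ) :
    ∃ η : ℝ, 0 < η ∧ η < 1 ∧ ∀ D : ℝ, ∃ N : ℝ, 0 < N ∧
      ∀ (P : (Fin d → Fin d → ℝ) → (Fin d → ℝ) → ℝ → ℝ), HasLinearGrowth Λ K₁ P →
      ∀ (A B : Type) [Nonempty A] [Nonempty B] (ω : ℝ → ℝ)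
        (a : A → B → E d → Fin d → Fin d → ℝ) (b : A → B → E d → Fin d → ℝ)
        (c f : A → B → E d → ℝ) (G : Set (E d)) (u v : E d → ℝ) (K M : ℝ),
        MonotoneOn ω (Ici 0) → (∀ t ∈ Icc (0 : ℝ) 1, t ^ χ ≤ ω t) →
        CoeffBounds δ K₀ γ ω a b c f →
        IsOpen G → Bornology.IsBounded G → Metric.diam G ≤ D →
        IsComparisonPair a b c f P χ K M G u v → 1 ≤ M → N * M ^ (1 / η) ≤ K →
        ∀ x ∈ G, u x - v x ≤ N * K ^ (-(χ / 4)) + N * M * ω (M ^ (-(1 / τ)) * K⁻¹) := by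
  have hγ₀ : 0 ≤ γ := hγ ▸ div_nonneg (by linarith) (by linarith)
  have hγ₁ : γ ≤ 1 := hγ ▸ div_le_one_of_le₀ (by linarith) (by linarith)
  obtain ⟨q, η, hexp⟩ := exists_admissibleExponents τ hχ₀ hχ₁ hγ
  refine ⟨η, hexp.pos, hexp.lt_one, fun D => ?_⟩
  obtain ⟨hone, -, -, -, hN⟩ := comparisonConst_lower_bounds d η D hδ hK₀ hΛ hK₁
  refine ⟨comparisonConst d δ K₀ Λ K₁ η D, by linarith, ?_⟩
  intro P hP A B _ _ ω a b c f G u v K M hω hωχ hC hG hGb hdiam huv hM hK x hx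
  obtain ⟨Ψ, hΨ⟩ := exists_isBarrier (S := closure G) (z := x) (D := D) ⟨0, hd⟩ hδ hK₀
    fun y hy => (Metric.dist_le_diam_of_mem hGb.closure hy (subset_closure hx)).trans
      ((Metric.diam_closure G).trans_le hdiam)
  have hscales := doublingScales_of_comparisonConst_mul_le (d := d) hexp hδ hK₀ hχ₀.le hχ₁.le
    hγ₀ hγ₁ hΛ hK₁ hτ.le hωχ hM hK
  have hK_pos : 0 < K := lt_of_lt_of_le (by positivity) hK
  have hω_nonneg : 0 ≤ ω (M ^ (-(1 / τ)) * K⁻¹) := le_trans (by positivity) hscales.le_modulus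
  calc u x - v x ≤ _ := huv.sub_le_of_isBarrier hC hscales hP hδ hχ₀.le hγ₀ hK₁ hM hω hG hGb hΨ
        x hx
    _ ≤ comparisonConst d δ K₀ Λ K₁ η D *
        (K ^ (-(χ / 4)) + M * ω (M ^ (-(1 / τ)) * K⁻¹)) := by
      rw [mul_right_comm]
      gcongr
    _ = _ := by ring

/-- **Theorem 3.1.** Let `G` be a bounded domain, `u, v ∈ C²(Ḡ)` with
`max(F[u], P[u] - K) ≥ 0 ≥ min(F[v], -P[-v] + K)` in `G` for `K ≥ 1`, `v ≥ u`
on `∂G`, and `‖u‖_{C^{1+χ}(G)}, ‖v‖_{C^{1+χ}(G)} ≤ M` with `M ≥ 1`. Then there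
are `N` (depending only on `τ`, `diam G`, `d`, `K0`, `δ`) and `η ∈ (0,1)`
(depending only on `τ, d, K0, δ`) such that `K ≥ N M^{1/η}` implies
`u - v ≤ N K^{-χ/4} + N M ω(M^{-1/τ} K^{-1})` in `G`. -/
theorem statement12 {d : ℕ} (hd : 1 ≤ d) (δ K0 χ γ δhat K1 τ : ℝ)
    (P : (Fin d → Fin d → ℝ) → (Fin d → ℝ) → ℝ → ℝ)
    (hδ0 : 0 < δ) (hδ1 : δ < 1) (hK0 : 0 ≤ K0) (hχ0 : 0 < χ) (hχ1 : χ < 1)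
    (hγ : γ = (4 - 3 * χ) / (8 - 4 * χ))
    (hδhat0 : 0 < δhat) (hδhat1 : δhat < δ) (hK1 : K0 ≤ K1)
    (hP : PAssump δhat K1 P) (hτ0 : 0 < τ) (hτ1 : τ < 1) :
    ∃ η : ℝ, 0 < η ∧ η < 1 ∧ ∀ D : ℝ, 0 < D → ∃ N : ℝ, 0 < N ∧
      ∀ (A B : Type) [MetricSpace A] [MetricSpace B],
      ∀ (ω : ℝ → ℝ) (a : A → B → E d → Fin d → Fin d → ℝ)
        (b : A → B → E d → Fin d → ℝ) (c f : A → B → E d → ℝ)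
        (G : Set (E d)) (u v : E d → ℝ) (K M : ℝ),
        Nonempty A → Nonempty B →
        ModulusAssump χ ω → CoeffAssump δ K0 γ ω a b c f →
        IsOpen G → G.Nonempty → Bornology.IsBounded G → Metric.diam G ≤ D →
        ContDiffOn ℝ 2 u (closure G) → ContDiffOn ℝ 2 v (closure G) →
        1 ≤ K →
        (∀ x ∈ G, 0 ≤ max (Fop a b c f u x) (Pop P u x - K)) →
        (∀ x ∈ G, min (Fop a b c f v x) (-(Pop P (fun y => -(v y)) x) + K) ≤ 0) →
        (∀ x ∈ frontier G, u x ≤ v x) →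
        1 ≤ M → HolderBound χ G u M → HolderBound χ G v M →
        N * M ^ (1 / η) ≤ K →
        ∀ x ∈ G, u x - v x ≤ N * K ^ (-(χ / 4)) + N * M * ω (M ^ (-(1 / τ)) * K⁻¹) := by
  obtain ⟨η, hη₀, hη₁, hN⟩ := statement12_general (Λ := d * δhat⁻¹) hd hδ0 hK0 hχ0 hχ1 hγ
    (by positivity) (hK0.trans hK1) hτ0
  refine ⟨η, hη₀, hη₁, fun D _ => ?_⟩
  obtain ⟨N, hN_pos, hN⟩ := hN D
  refine ⟨N, hN_pos, ?_⟩
  intro A B _ _ ω a b c f G u v K M _ _ hω hC hG _ hGb hdiam hu hv _ hsub hsuper hle hM hHu hHv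
  have contDiffAt_of_mem {w : E d → ℝ} (hw : ContDiffOn ℝ 2 w (closure G)) :
      ∀ x ∈ G, ContDiffAt ℝ 2 w x := fun x hx =>
    hw.contDiffAt (mem_of_superset (hG.mem_nhds hx) subset_closure)
  exact hN P (hP.hasLinearGrowth hδhat0.le) A B ω a b c f G u v K M hω.2.1 hω.2.2.2
    hC.coeffBounds hG hGb hdiam
    ⟨hu.continuousOn, hv.continuousOn, contDiffAt_of_mem hu, contDiffAt_of_mem hv, hsub, hsuper,
      hle, hHu, hHv⟩ hM
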